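/- arXiv:1307.4456 — 3 statements merged into one kernel-verified Lean document; each statement's English description precedes it below -/
import Mathlib

section
/- By the Nash-Williams formula, a graph G has arboricity at most b if and only if every subgraph H of G with at least 2 vertices satisfies |E(H)| ≤ b(|V(H)| − 1). -/
/-!
The edge sets of forests in `G` are the independent sets of the cycle matroid of `G`, so arboricity
at most `b` means that `E(G)` is covered by `b` independent sets. By the matroid partition theorem
this happens exactly when `|X| ≤ b · r(X)` for every finite set `X` of edges (when `G` is infinite,
Rado selection passes from finite sets to all of `E(G)`). Since a forest on `n ≥ 1` vertices has at
most `n - 1` edges, the rank inequality for `E(H)` gives the bound for `H`. Conversely, the bound on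
each connected component of `X` adds up to the rank inequality, because a maximal forest in `X` has
at least `|c| - 1` edges on each component `c`.

The partition theorem is proved by inserting the elements one at a time into sets `J i`, keeping
`|Y| + ∑ i, |J i| ≤ ∑ i, r i (J i ∪ Y)` for every set `Y` of remaining elements. If `e` cannot be
inserted into any `J i`, then for each `i` some set `Y i` attains equality and `J i ∪ Y i` spans `e`
in `M i`. By submodularity the union `Z` of the `Y i` also attains equality, and every `J i ∪ Z`
spans `e`, so the inequality fails for `insert e Z`.
-/

/-- `G` has arboricity at most `b`: the edge set of `G` is the union of the edge
sets of `b` forests. -/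
def ArboricityLE {V : Type*} (G : SimpleGraph V) (b : ℕ) : Prop :=
  ∃ F : Fin b → SimpleGraph V, (∀ i, (F i).IsAcyclic) ∧ (⨆ i, F i) = G

open Finset Function SimpleGraph

/-- The rank of a finite set in a matroid, as a natural number. Such a rank is never infinite, so
`ENat.toNat` loses nothing. -/
noncomputable def finRk {α : Type*} (M : Matroid α) (X : Finset α) : ℕ := (M.eRk X).toNat

section Rank

variable {α : Type*} {M : Matroid α} {X Y : Finset α}

lemma coe_finRk (M : Matroid α) (X : Finset α) : (finRk M X : ℕ∞) = M.eRk X :=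
  ENat.natCast_toNat (M.eRk_ne_top_iff.2 (M.isRkFinite_of_finite X.finite_toSet))

lemma finRk_eq_ncard_of_isBasis' {I : Set α} (hI : M.IsBasis' I X) : finRk M X = I.ncard := by
  rw [finRk, ← hI.encard_eq_eRk, Set.ncard_def]

lemma finRk_le_card (M : Matroid α) (X : Finset α) : finRk M X ≤ #X := by
  rw [← ENat.natCast_le_natCast, coe_finRk, ← Set.encard_coe_eq_coe_finsetCard]
  exact M.eRk_le_encard X

lemma finRk_mono (M : Matroid α) : Monotone (finRk M) := fun X Y hXY => by
  rw [← ENat.natCast_le_natCast, coe_finRk, coe_finRk]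
  exact M.eRk_mono (mod_cast hXY)

lemma indep_iff_finRk_eq_card : M.Indep X ↔ finRk M X = #X := by
  rw [Matroid.indep_iff_eRk_eq_encard_of_finite X.finite_toSet, ← coe_finRk,
    Set.encard_coe_eq_coe_finsetCard, Nat.cast_inj]

lemma finRk_union_add_finRk_inter_le [DecidableEq α] (M : Matroid α) (X Y : Finset α) :
    finRk M (X ∪ Y) + finRk M (X ∩ Y) ≤ finRk M X + finRk M Y := by
  rw [← ENat.natCast_le_natCast]
  push_cast [coe_finRk]
  rw [add_comm]
  exact M.eRk_inter_add_eRk_union_le X Y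

lemma finRk_insert_le_of_subset [DecidableEq α] {e : α} (hXY : X ⊆ Y)
    (h : finRk M (insert e X) ≤ finRk M X) : finRk M (insert e Y) ≤ finRk M Y := by
  have hsub := finRk_union_add_finRk_inter_le M (insert e X) Y
  have hmono := finRk_mono M (subset_inter (subset_insert e X) hXY)
  rw [insert_union, union_eq_right.2 hXY] at hsub
  omega

end Rank

section Partition

variable {α ι : Type*} [DecidableEq α] [Fintype ι]

/-- The right-hand side of the rank inequality in matroid partition: the total rank of the sets
`J i ∪ Y` in the matroids `M i`. -/
noncomputable def sumRk (M : ι → Matroid α) (J : ι → Finset α) (Y : Finset α) : ℕ :=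
  ∑ i, finRk (M i) (J i ∪ Y)

/-- The rank inequality under which a family `J` can be enlarged, keeping each `J i` independent in
`M i`, so as to cover `X`. The case `Y = ∅` forces each `J i` to be independent already. -/
def IsExtendable (M : ι → Matroid α) (J : ι → Finset α) (X : Finset α) : Prop :=
  ∀ Y ⊆ X, #Y + ∑ i, #(J i) ≤ sumRk M J Y

variable {M : ι → Matroid α} {J : ι → Finset α} {X Y : Finset α} {e : α}

lemma sumRk_union_add_sumRk_inter_le (M : ι → Matroid α) (J : ι → Finset α) (X Y : Finset α) :
    sumRk M J (X ∪ Y) + sumRk M J (X ∩ Y) ≤ sumRk M J X + sumRk M J Y := by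
  simp only [sumRk, ← sum_add_distrib]
  refine sum_le_sum fun i _ => ?_
  rw [union_union_distrib_left, union_inter_distrib_left]
  exact finRk_union_add_finRk_inter_le _ _ _

lemma sum_card_update_insert_le [DecidableEq ι] (J : ι → Finset α) (i : ι) (e : α) :
    ∑ j, #(update J i (insert e (J i)) j) ≤ ∑ j, #(J j) + 1 := by
  simp only [apply_update fun _ => card, sum_update_of_mem (mem_univ i)]
  rw [← add_sum_erase univ (fun j => #(J j)) (mem_univ i), sdiff_singleton_eq_erase]
  have := card_insert_le e (J i)
  omega

lemma finRk_insert_le_of_sumRk_update_le [DecidableEq ι] {i : ι}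
    (h : sumRk M (update J i (insert e (J i))) Y ≤ sumRk M J Y) :
    finRk (M i) (insert e (J i ∪ Y)) ≤ finRk (M i) (J i ∪ Y) := by
  have hle (j : ι) : finRk (M j) (J j ∪ Y) ≤
      finRk (M j) (update J i (insert e (J i)) j ∪ Y) :=
    finRk_mono _ (union_subset_union_left (le_update_self_iff.2 (subset_insert e (J i)) j))
  have heq := (sum_eq_sum_iff_of_le fun j _ => hle j).1 ((sum_le_sum fun j _ => hle j).antisymm h)
  simpa [insert_union] using (heq i (mem_univ i)).ge

namespace IsExtendable

lemma indep (h : IsExtendable M J X) (i : ι) : (M i).Indep (J i) := by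
  have hle (i : ι) : finRk (M i) (J i) ≤ #(J i) := finRk_le_card _ _
  have hsum : ∑ i, finRk (M i) (J i) = ∑ i, #(J i) :=
    (sum_le_sum fun i _ => hle i).antisymm (by simpa [sumRk] using h ∅ (empty_subset X))
  exact indep_iff_finRk_eq_card.2
    ((sum_eq_sum_iff_of_le fun i _ => hle i).1 hsum i (mem_univ i))

lemma sumRk_biUnion_le {κ : Type*} (h : IsExtendable M J X) {Y : κ → Finset α}
    (hYX : ∀ k, Y k ⊆ X) (hY : ∀ k, sumRk M J (Y k) ≤ #(Y k) + ∑ i, #(J i)) (s : Finset κ) :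
    sumRk M J (s.biUnion Y) ≤ #(s.biUnion Y) + ∑ i, #(J i) := by
  classical
  induction s using Finset.induction_on with
  | empty => simpa [sumRk] using sum_le_sum fun i _ => finRk_le_card (M i) (J i)
  | insert k s _ ih =>
    rw [biUnion_insert]
    have hsub := sumRk_union_add_sumRk_inter_le M J (Y k) (s.biUnion Y)
    have hinter := h (Y k ∩ s.biUnion Y) (inter_subset_left.trans (hYX k))
    have hcard := card_union_add_card_inter (Y k) (s.biUnion Y)
    have hk := hY k
    omega

lemma exists_update_insert [DecidableEq ι] (h : IsExtendable M J (insert e X)) (he : e ∉ X) :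
    ∃ i, IsExtendable M (update J i (insert e (J i))) X := by
  by_contra! hfail
  simp only [IsExtendable, not_forall, not_le, exists_prop] at hfail
  choose Y hYX hlt using hfail
  have htight (i : ι) : sumRk M (update J i (insert e (J i))) (Y i) ≤ #(Y i) + ∑ j, #(J j) := by
    have := sum_card_update_insert_le J i e
    have := hlt i
    omega
  have hYX' (i : ι) : Y i ⊆ insert e X := (hYX i).trans (subset_insert e X)
  have hspan (i : ι) : finRk (M i) (insert e (J i ∪ Y i)) ≤ finRk (M i) (J i ∪ Y i) :=
    finRk_insert_le_of_sumRk_update_le ((htight i).trans (h (Y i) (hYX' i)))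
  have hYtight (i : ι) : sumRk M J (Y i) ≤ #(Y i) + ∑ j, #(J j) := by
    refine le_trans (sum_le_sum fun j _ => finRk_mono _ (union_subset_union_left ?_)) (htight i)
    exact le_update_self_iff.2 (subset_insert e (J i)) j
  set Z := univ.biUnion Y
  have hZtight : sumRk M J Z ≤ #Z + ∑ j, #(J j) := h.sumRk_biUnion_le hYX' hYtight univ
  have hZspan : sumRk M J (insert e Z) ≤ sumRk M J Z := sum_le_sum fun i _ => by
    rw [union_insert]
    refine finRk_insert_le_of_subset (union_subset_union_right ?_) (hspan i)
    exact subset_biUnion_of_mem Y (mem_univ i)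
  have hZX : Z ⊆ X := biUnion_subset.2 fun i _ => hYX i
  have hbound := h (insert e Z) (insert_subset_insert e hZX)
  rw [card_insert_of_notMem fun heZ => he (hZX heZ)] at hbound
  omega

lemma exists_indep_cover (h : IsExtendable M J X) :
    ∃ I : ι → Finset α, (∀ i, (M i).Indep (I i)) ∧ (∀ i, J i ⊆ I i) ∧ ∀ e ∈ X, ∃ i, e ∈ I i := by
  classical
  induction X using Finset.induction_on generalizing J with
  | empty => exact ⟨J, h.indep, fun i => Subset.rfl, by simp⟩
  | insert e X he ih =>
    obtain ⟨i, hi⟩ := h.exists_update_insert he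
    obtain ⟨I, hI, hJI, hXI⟩ := ih hi
    have heI : e ∈ I i := hJI i (by simp)
    refine ⟨I, hI, fun j => ?_, forall_mem_insert _ _ _ |>.2 ⟨⟨i, heI⟩, hXI⟩⟩
    exact (le_update_self_iff.2 (subset_insert e (J i)) j).trans (hJI j)

end IsExtendable

end Partition

lemma exists_indep_partition {α ι : Type*} [Fintype ι] [Nonempty ι] {M : ι → Matroid α}
    {X : Finset α} (h : ∀ Y ⊆ X, #Y ≤ ∑ i, finRk (M i) Y) :
    ∃ c : α → ι, ∀ i, (M i).Indep {e ∈ X | c e = i} := by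
  classical
  have hext : IsExtendable M (fun _ => ∅) X := fun Y hY => by simpa [sumRk] using h Y hY
  obtain ⟨I, hI, -, hXI⟩ := hext.exists_indep_cover
  choose! c hc using hXI
  refine ⟨c, fun i => (hI i).subset ?_⟩
  rintro e ⟨he, rfl⟩
  exact hc e he

theorem exists_indep_cover_iff {α ι : Type*} [Fintype ι] {M : ι → Matroid α}
    [∀ i, (M i).Finitary] {X : Set α} :
    (∃ I : ι → Set α, (∀ i, (M i).Indep (I i)) ∧ X ⊆ ⋃ i, I i) ↔
      ∀ Y : Finset α, ↑Y ⊆ X → #Y ≤ ∑ i, finRk (M i) Y := by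
  classical
  constructor
  · rintro ⟨I, hI, hXI⟩ Y hYX
    have hcover : Y ⊆ univ.biUnion fun i => {e ∈ Y | e ∈ I i} := fun e he => by
      simpa [he] using hXI (hYX he)
    refine (card_le_card hcover).trans (card_biUnion_le.trans (sum_le_sum fun i _ => ?_))
    have hind : (M i).Indep ({e ∈ Y | e ∈ I i} : Finset α) :=
      (hI i).subset fun e he => (mem_filter.1 he).2
    rw [← indep_iff_finRk_eq_card.1 hind]
    exact finRk_mono _ (filter_subset _ _)
  · intro h
    obtain hι | hι := isEmpty_or_nonempty ι
    · refine ⟨fun _ => ∅, isEmptyElim, fun e he => ?_⟩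
      simpa using h {e} (by simpa using he)
    choose g hg using fun s : Finset α =>
      exists_indep_partition fun Y (hY : Y ⊆ {e ∈ s | e ∈ X}) =>
        h Y fun e he => (mem_filter.1 (hY he)).2
    obtain ⟨c, hc⟩ := rado_selection g
    refine ⟨fun i => {e ∈ X | c e = i},
      fun i => Matroid.indep_of_forall_finite_subset_indep _ fun J hJ hJfin => ?_,
      fun e he => Set.mem_iUnion.2 ⟨c e, he, rfl⟩⟩
    obtain ⟨t, hJt, hct⟩ := hc hJfin.toFinset
    refine (hg t i).subset fun e he => ?_
    have heJ : e ∈ hJfin.toFinset := hJfin.mem_toFinset.2 he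
    exact ⟨mem_filter.2 ⟨hJt heJ, (hJ he).1⟩, (hct e heJ).symm.trans (hJ he).2⟩

/-- `I` is the edge set of a forest contained in `G`. -/
def IsEdgeForest {V : Type*} (G : SimpleGraph V) (I : Set (Sym2 V)) : Prop :=
  I ⊆ G.edgeSet ∧ (fromEdgeSet I).IsAcyclic

section CycleMatroid

variable {V : Type*} {G F : SimpleGraph V} {I J X : Set (Sym2 V)}

lemma edgeSet_fromEdgeSet_of_subset (hI : I ⊆ G.edgeSet) : (fromEdgeSet I).edgeSet = I := by
  rw [edgeSet_fromEdgeSet, sdiff_eq_left]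
  exact Set.disjoint_left.2 fun _ he => edgeSet_subset_compl_diagSet G (hI he)

lemma reachable_le_reachable (h : F.Adj ≤ G.Reachable) : F.Reachable ≤ G.Reachable := by
  rw [reachable_eq_reflTransGen] at h
  rw [reachable_eq_reflTransGen, reachable_eq_reflTransGen]
  exact Relation.reflTransGen_closed h

lemma isEdgeForest_edgeSet_iff : IsEdgeForest G F.edgeSet ↔ F ≤ G ∧ F.IsAcyclic := by
  rw [IsEdgeForest, edgeSet_subset_edgeSet, fromEdgeSet_edgeSet]

lemma isEdgeForest_fromEdgeSet_iff (hX : X ⊆ G.edgeSet) :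
    IsEdgeForest (fromEdgeSet X) I ↔ IsEdgeForest G I ∧ I ⊆ X := by
  rw [IsEdgeForest, IsEdgeForest, edgeSet_fromEdgeSet_of_subset hX]
  exact ⟨fun h => ⟨⟨h.1.trans hX, h.2⟩, h.1⟩, fun h => ⟨h.2, h.1.2⟩⟩

lemma maximal_isEdgeForest_edgeSet_iff :
    Maximal (IsEdgeForest G) F.edgeSet ↔ Maximal (fun F => F ≤ G ∧ F.IsAcyclic) F := by
  refine ⟨fun h => ⟨isEdgeForest_edgeSet_iff.1 h.prop, fun F' hF' hle => ?_⟩,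
    fun h => ⟨isEdgeForest_edgeSet_iff.2 h.prop, fun J hJ hle => ?_⟩⟩
  · exact edgeSet_subset_edgeSet.1
      (h.le_of_ge (isEdgeForest_edgeSet_iff.2 hF') (edgeSet_mono hle))
  · obtain ⟨F', rfl⟩ : ∃ F' : SimpleGraph V, F'.edgeSet = J :=
      ⟨_, edgeSet_fromEdgeSet_of_subset hJ.1⟩
    exact edgeSet_mono
      (h.le_of_ge (isEdgeForest_edgeSet_iff.1 hJ) (edgeSet_subset_edgeSet.1 hle))

namespace IsEdgeForest

lemma mono (hJ : IsEdgeForest G J) (hIJ : I ⊆ J) : IsEdgeForest G I :=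
  ⟨hIJ.trans hJ.1, hJ.2.anti (fromEdgeSet_mono hIJ)⟩

lemma maximal_iff_reachable_eq (hI : IsEdgeForest G I) :
    Maximal (IsEdgeForest G) I ↔ (fromEdgeSet I).Reachable = G.Reachable := by
  obtain ⟨F, rfl⟩ : ∃ F : SimpleGraph V, F.edgeSet = I := ⟨_, edgeSet_fromEdgeSet_of_subset hI.1⟩
  obtain ⟨hFG, hF⟩ := isEdgeForest_edgeSet_iff.1 hI
  rw [maximal_isEdgeForest_edgeSet_iff, fromEdgeSet_edgeSet,
    maximal_isAcyclic_iff_reachable_eq hFG hF]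

lemma exists_maximal_superset (hI : IsEdgeForest G I) :
    ∃ J, I ⊆ J ∧ Maximal (IsEdgeForest G) J := by
  obtain ⟨F, rfl⟩ : ∃ F : SimpleGraph V, F.edgeSet = I := ⟨_, edgeSet_fromEdgeSet_of_subset hI.1⟩
  obtain ⟨hFG, hF⟩ := isEdgeForest_edgeSet_iff.1 hI
  obtain ⟨T, hFT, hT⟩ := exists_maximal_isAcyclic_of_le_isAcyclic hFG hF
  exact ⟨T.edgeSet, edgeSet_mono hFT, maximal_isEdgeForest_edgeSet_iff.2 hT⟩

lemma insert_of_not_reachable {u v : V} (hI : IsEdgeForest G I) (huv : G.Adj u v)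
    (h : ¬ (fromEdgeSet I).Reachable u v) : IsEdgeForest G (insert s(u, v) I) := by
  refine ⟨Set.insert_subset huv hI.1, ?_⟩
  rw [Set.insert_eq, Set.union_comm, fromEdgeSet_union]
  exact hI.2.sup_edge_of_not_reachable h

lemma exists_insert (hI : IsEdgeForest G I) (hImax : ¬ Maximal (IsEdgeForest G) I)
    (hJ : Maximal (IsEdgeForest G) J) : ∃ e ∈ J \ I, IsEdgeForest G (insert e I) := by
  by_contra! hfail
  have hadj : (fromEdgeSet J).Adj ≤ (fromEdgeSet I).Reachable := fun u v huv => by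
    by_contra hreach
    obtain ⟨heJ, hne⟩ := (fromEdgeSet_adj J).1 huv
    have heI : s(u, v) ∉ I := fun heI => hreach ((fromEdgeSet_adj I).2 ⟨heI, hne⟩).reachable
    exact hfail _ ⟨heJ, heI⟩ (hI.insert_of_not_reachable (hJ.prop.1 heJ) hreach)
  have hspan : G.Reachable ≤ (fromEdgeSet I).Reachable :=
    (hJ.prop.maximal_iff_reachable_eq.1 hJ).ge.trans (reachable_le_reachable hadj)
  exact hImax (hI.maximal_iff_reachable_eq.2
    (hspan.antisymm' fun u v h => h.mono ((fromEdgeSet_mono hI.1).trans_eq G.fromEdgeSet_edgeSet)))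

lemma of_forall_finite (h : ∀ J ⊆ I, J.Finite → IsEdgeForest G J) : IsEdgeForest G I := by
  refine ⟨fun e he => (h {e} (by simpa) (Set.finite_singleton e)).1 rfl, fun v p hp => ?_⟩
  have hpI : p.edgeSet ⊆ I := fun e he => by
    have := p.edges_subset_edgeSet he
    rw [edgeSet_fromEdgeSet] at this
    exact this.1
  have hp' : ∀ e ∈ p.edges, e ∈ (fromEdgeSet p.edgeSet).edgeSet := fun e he => by
    rw [edgeSet_fromEdgeSet]
    exact ⟨he, not_isDiag_of_mem_edgeSet _ (p.edges_subset_edgeSet he)⟩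
  exact (h p.edgeSet hpI p.edges.finite_toSet).2 _ (hp.transfer hp')

end IsEdgeForest

/-- The cycle matroid of `G`, with ground set the edges of `G` and independent sets the edge sets of
forests. -/
def cycleMatroid (G : SimpleGraph V) : Matroid (Sym2 V) :=
  IndepMatroid.matroid
  { E := G.edgeSet
    Indep := IsEdgeForest G
    indep_empty := by simp [IsEdgeForest]
    indep_subset := fun _ _ hJ => hJ.mono
    indep_aug := fun _ _ hI => hI.exists_insert
    indep_maximal := fun X hX I hI hIX => by
      simp only [← isEdgeForest_fromEdgeSet_iff hX]
      exact ((isEdgeForest_fromEdgeSet_iff hX).2 ⟨hI, hIX⟩).exists_maximal_superset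
    subset_ground := fun _ hI => hI.1 }

@[simp] lemma ground_cycleMatroid : (cycleMatroid G).E = G.edgeSet := rfl

@[simp] lemma indep_cycleMatroid : (cycleMatroid G).Indep = IsEdgeForest G := rfl

instance cycleMatroid_finitary : (cycleMatroid G).Finitary :=
  ⟨fun _ => IsEdgeForest.of_forall_finite⟩

lemma isBasis_cycleMatroid_iff (hX : X ⊆ G.edgeSet) :
    (cycleMatroid G).IsBasis I X ↔ Maximal (IsEdgeForest (fromEdgeSet X)) I := by
  rw [Matroid.IsBasis, ground_cycleMatroid, and_iff_left hX]
  simp only [indep_cycleMatroid, ← isEdgeForest_fromEdgeSet_iff hX]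

lemma arboricityLE_iff_exists_indep_cover {b : ℕ} :
    ArboricityLE G b ↔
      ∃ I : Fin b → Set (Sym2 V), (∀ i, (cycleMatroid G).Indep (I i)) ∧ G.edgeSet ⊆ ⋃ i, I i := by
  simp only [indep_cycleMatroid]
  constructor
  · rintro ⟨F, hF, rfl⟩
    refine ⟨fun i => (F i).edgeSet, fun i => isEdgeForest_edgeSet_iff.2 ⟨le_iSup F i, hF i⟩, ?_⟩
    rw [edgeSet_iSup]
  · rintro ⟨I, hI, hGI⟩
    refine ⟨fun i => fromEdgeSet (I i), fun i => (hI i).2, ?_⟩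
    rw [← fromEdgeSet_iUnion, (Set.iUnion_subset fun i => (hI i).1).antisymm hGI,
      fromEdgeSet_edgeSet]

end CycleMatroid

section Counting

variable {V : Type*} {G F : SimpleGraph V} {b : ℕ}

lemma ncard_edgeSet_add_one_le_of_isAcyclic [Finite V] [Nonempty V] (hF : F.IsAcyclic) :
    F.edgeSet.ncard + 1 ≤ Nat.card V := by
  classical
  have := Fintype.ofFinite V
  obtain ⟨T, hFT, -, hT⟩ := connected_top.exists_isTree_le_of_le_of_isAcyclic le_top hF
  rw [Nat.card_eq_fintype_card, ← hT.card_edgeFinset, Set.ncard_eq_toFinset_card']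
  exact Nat.add_le_add_right (card_le_card (edgeFinset_mono hFT)) 1

lemma ncard_edgeSet_induce_of_support_subset {W : Set V} (hW : F.support ⊆ W) :
    (F.induce W).edgeSet.ncard = F.edgeSet.ncard := by
  rw [← congrArg edgeSet ((spanningCoe_induce_eq_self F W).2 hW), edgeSet_map]
  exact (Set.ncard_image_of_injective _ (Embedding.injective _)).symm

lemma finRk_cycleMatroid_add_one_le {X : Finset (Sym2 V)} {W : Set V} (hW : W.Finite)
    (hWne : W.Nonempty) (hXW : (fromEdgeSet (X : Set (Sym2 V))).support ⊆ W) :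
    finRk (cycleMatroid G) X + 1 ≤ W.ncard := by
  obtain ⟨I, hI⟩ := (cycleMatroid G).exists_isBasis' X
  have := hW.to_subtype
  have := hWne.to_subtype
  have hIW : (fromEdgeSet I).support ⊆ W := (support_mono (fromEdgeSet_mono hI.subset)).trans hXW
  rw [finRk_eq_ncard_of_isBasis' hI, ← edgeSet_fromEdgeSet_of_subset hI.indep.1,
    ← ncard_edgeSet_induce_of_support_subset hIW]
  exact ncard_edgeSet_add_one_le_of_isAcyclic (hI.indep.2.induce W)

/-- The connected component of `F` containing an endpoint of `e`. The choice of the endpoint is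
immaterial when both lie in one component, as for the edges of `F`. -/
noncomputable def edgeComponent (F : SimpleGraph V) (e : Sym2 V) : F.ConnectedComponent :=
  F.connectedComponentMk e.out.1

lemma edgeComponent_mk_eq_iff {u v : V} (h : F.Reachable u v) {c : F.ConnectedComponent} :
    edgeComponent F s(u, v) = c ↔ u ∈ c.supp ∧ v ∈ c.supp := by
  have huv := ConnectedComponent.eq.2 h
  obtain hout | hout := Sym2.mem_iff.1 (Sym2.out_fst_mem s(u, v)) <;>
    simp [edgeComponent, ConnectedComponent.mem_supp_iff, hout, huv]

lemma ncard_supp_le_card_edges_add_one [DecidableEq F.ConnectedComponent]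
    {I : Finset (Sym2 V)} (hI : F.edgeSet = I) (c : F.ConnectedComponent) :
    c.supp.ncard ≤ #{e ∈ I | edgeComponent F e = c} + 1 := by
  refine c.connected_toSimpleGraph.card_vert_le_card_edgeSet_add_one.trans
    (Nat.add_le_add_right ?_ 1)
  rw [Nat.card_coe_set_eq, ← Set.ncard_coe_finset,
    ← Set.ncard_image_of_injective _ (Sym2.map.injective Subtype.val_injective)]
  refine Set.ncard_le_ncard ?_ (finite_toSet _)
  rintro _ ⟨⟨u, v⟩, huv, rfl⟩
  have hadj : F.Adj u v := huv
  refine mem_coe.2 (mem_filter.2 ⟨mem_coe.1 (hI ▸ hadj), ?_⟩)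
  exact (edgeComponent_mk_eq_iff hadj.reachable).2 ⟨u.2, v.2⟩

lemma finite_support_of_finite_edgeSet (hF : F.edgeSet.Finite) : F.support.Finite := by
  classical
  refine (hF.biUnion fun e _ => e.toFinset.finite_toSet).subset fun u ⟨v, huv⟩ => ?_
  exact Set.mem_biUnion (x := s(u, v)) huv (by simp)

lemma supp_subset_support_of_nontrivial {c : F.ConnectedComponent} (hc : c.supp.Nontrivial) :
    c.supp ⊆ F.support := fun u hu => by
  obtain ⟨v, hv, hne⟩ := hc.exists_ne u
  exact mem_support_of_reachable hne.symm (c.reachable_of_mem_supp hu hv)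

lemma finite_edgeSet_of_finite_verts {H : G.Subgraph} (hH : H.verts.Finite) : H.edgeSet.Finite := by
  refine hH.toFinset.sym2.finite_toSet.subset fun e he => mem_coe.2 (mem_sym2_iff.2 fun v hv => ?_)
  exact hH.mem_toFinset.2 (H.mem_verts_of_mem_edge he hv)

lemma card_le_mul_ncard_sub_one {W : Set V} (hW : 2 ≤ W.ncard) {A : Finset (Sym2 V)}
    (hG : ∀ H : G.Subgraph, 2 ≤ H.verts.ncard → H.edgeSet.ncard ≤ b * (H.verts.ncard - 1))
    (hA : ∀ {u v}, s(u, v) ∈ A → G.Adj u v ∧ u ∈ W ∧ v ∈ W) :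
    #A ≤ b * (W.ncard - 1) := by
  have hWfin : W.Finite := Set.finite_of_ncard_pos (by omega)
  refine le_trans ?_ (hG ((⊤ : G.Subgraph).induce W) hW)
  rw [← Set.ncard_coe_finset]
  refine Set.ncard_le_ncard ?_ (finite_edgeSet_of_finite_verts hWfin)
  rintro ⟨u, v⟩ he
  obtain ⟨hadj, hu, hv⟩ := hA he
  exact ⟨hu, hv, hadj⟩

lemma card_le_mul_card_of_reachable
    (hG : ∀ H : G.Subgraph, 2 ≤ H.verts.ncard → H.edgeSet.ncard ≤ b * (H.verts.ncard - 1))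
    {I X : Finset (Sym2 V)} (hF : F.edgeSet = I) (hIX : I ⊆ X) (hXG : ↑X ⊆ G.edgeSet)
    (hspan : ∀ {u v}, s(u, v) ∈ X → F.Reachable u v) : #X ≤ b * #I := by
  classical
  have hlocal (c) (hc : c ∈ X.image (edgeComponent F)) :
      #{e ∈ X | edgeComponent F e = c} ≤ b * #{e ∈ I | edgeComponent F e = c} := by
    have hmem {u v : V} (he : s(u, v) ∈ ({e ∈ X | edgeComponent F e = c} : Finset _)) :
        G.Adj u v ∧ u ∈ c.supp ∧ v ∈ c.supp := by
      obtain ⟨heX, hec⟩ := mem_filter.1 he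
      exact ⟨hXG heX, (edgeComponent_mk_eq_iff (hspan heX)).1 hec⟩
    obtain ⟨⟨x, y⟩, hxy, hxyc⟩ := mem_image.1 hc
    obtain ⟨hadj, hx, hy⟩ := hmem (mem_filter.2 ⟨hxy, hxyc⟩)
    have hnt : c.supp.Nontrivial := ⟨x, hx, y, hy, hadj.ne⟩
    have hfin : c.supp.Finite :=
      (finite_support_of_finite_edgeSet (hF ▸ I.finite_toSet)).subset
        (supp_subset_support_of_nontrivial hnt)
    refine (card_le_mul_ncard_sub_one ((Set.one_lt_ncard_iff_nontrivial_and_finite).2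
      ⟨hnt, hfin⟩) hG hmem).trans (Nat.mul_le_mul_left b ?_)
    exact Nat.sub_le_of_le_add (ncard_supp_le_card_edges_add_one hF c)
  have hmaps (A : Finset (Sym2 V)) (hA : A ⊆ X) :
      #A = ∑ c ∈ X.image (edgeComponent F), #{e ∈ A | edgeComponent F e = c} :=
    card_eq_sum_card_fiberwise fun e he => mem_image_of_mem _ (hA he)
  rw [hmaps X Subset.rfl, hmaps I hIX, mul_sum]
  exact sum_le_sum hlocal

lemma card_le_mul_finRk_cycleMatroid
    (hG : ∀ H : G.Subgraph, 2 ≤ H.verts.ncard → H.edgeSet.ncard ≤ b * (H.verts.ncard - 1))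
    {X : Finset (Sym2 V)} (hX : ↑X ⊆ G.edgeSet) : #X ≤ b * finRk (cycleMatroid G) X := by
  obtain ⟨I, hI⟩ := (cycleMatroid G).exists_isBasis X
  have hmax := (isBasis_cycleMatroid_iff hX).1 hI
  lift I to Finset (Sym2 V) using X.finite_toSet.subset hI.subset
  rw [finRk_eq_ncard_of_isBasis' hI.isBasis', Set.ncard_coe_finset]
  refine card_le_mul_card_of_reachable hG (edgeSet_fromEdgeSet_of_subset hI.indep.1)
    (mod_cast hI.subset) hX fun {u v} he => ?_
  rw [hmax.prop.maximal_iff_reachable_eq.1 hmax]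
  have hadj : G.Adj u v := hX he
  exact ((fromEdgeSet_adj _).2 ⟨he, hadj.ne⟩).reachable

end Counting

theorem nash_williams_general {V : Type*} (G : SimpleGraph V) (b : ℕ) :
    ArboricityLE G b ↔
      ∀ H : G.Subgraph, 2 ≤ H.verts.ncard → H.edgeSet.ncard ≤ b * (H.verts.ncard - 1) := by
  refine arboricityLE_iff_exists_indep_cover.trans
    (exists_indep_cover_iff.trans ⟨fun h H hH => ?_, fun hG Y hY => ?_⟩)
  · have hfin : H.verts.Finite := Set.finite_of_ncard_pos (by omega)
    have hsupp : (fromEdgeSet H.edgeSet).support ⊆ H.verts := fun u ⟨v, huv⟩ =>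
      H.mem_verts_of_mem_edge ((fromEdgeSet_adj _).1 huv).1 (Sym2.mem_mk_left u v)
    lift H.edgeSet to Finset (Sym2 V) using finite_edgeSet_of_finite_verts hfin with X hX
    have hne : H.verts.Nonempty := Set.nonempty_of_ncard_ne_zero (by omega)
    have hrank := finRk_cycleMatroid_add_one_le (G := G) hfin hne hsupp
    have hcard : #X ≤ b * finRk (cycleMatroid G) X := by
      simpa using h X (hX ▸ H.edgeSet_subset)
    rw [Set.ncard_coe_finset]
    exact hcard.trans (Nat.mul_le_mul_left b (Nat.le_sub_of_add_le hrank))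
  · simpa using card_le_mul_finRk_cycleMatroid hG hY

/-- **Nash-Williams' formula.** A graph `G` has arboricity at most `b` if and
only if every subgraph `H` of `G` with at least `2` vertices satisfies
`|E(H)| ≤ b(|V(H)| − 1)`. -/
theorem nash_williams {V : Type*} [Fintype V] (G : SimpleGraph V) (b : ℕ) :
    ArboricityLE G b ↔
      ∀ H : G.Subgraph, 2 ≤ H.verts.ncard → H.edgeSet.ncard ≤ b * (H.verts.ncard - 1) :=
  nash_williams_general G b
end

section
/- For all integers d ≥ 4, k ≥ 3, and Δ ≥ 2d, there exists a graph with average degree at most d, maximum degree at most Δ, diameter at most k, and at least (d/8)·⌊Δ/4⌋^{k−1} vertices. -/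
/-!
Take the generalized de Bruijn digraph on `ZMod (t² Q)`, with arcs `x → q x + r` for `r < q`, and
write its vertices in mixed radix as `(c, a, e)` with outer digits `c, e < t` and middle digit
`a < Q`. For each pair `(a, b)` with `a < Q` and `b < t`, add `l` leaves, each joined to all core
vertices that have middle digit `a` and an outer digit equal to `b`. For `l = q` there are `t` arcs
and `2t - 1` attaching edges per leaf, so the average degree is at most `6t - 2`.

After `m` arcs, `x` reaches every `q ^ m * x + r` with `r < q ^ m`. For `Q = q ^ m` this connects
two leaves within `m + 2` steps: leave the first one, labelled `(a, b)`, through a core vertex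
`(b, a, e)`, whose last digit `e` is free. The choice of `e` and of the `m` arcs yields `t Q`
consecutive residues, one of which ends in the two digits labelling the second leaf.
-/

open Set SimpleGraph

section Graphs

theorem ncard_setOf_sum {α β : Type*} [Finite α] [Finite β] (p : α ⊕ β → Prop) :
    {w | p w}.ncard = {a | p (.inl a)}.ncard + {b | p (.inr b)}.ncard := by
  simp only [← Nat.card_coe_set_eq, coe_ofPred]
  rw [Nat.card_congr Equiv.subtypeSum, Nat.card_sum]

variable {V : Type*}

theorem ncard_edgeSet_fromRel_le [Fintype V] (r : V → V → Prop) :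
    (fromRel r).edgeSet.ncard ≤ ∑ v, {w | r v w}.ncard := by
  have subset_arcs : (fromRel r).edgeSet ⊆ ⋃ v, (s(v, ·)) '' {w | r v w} := by
    intro e he
    induction e using Sym2.ind with
    | _ u v =>
      rcases he.2 with h | h
      · exact mem_iUnion.2 ⟨u, v, h, rfl⟩
      · exact mem_iUnion.2 ⟨v, u, h, Sym2.eq_swap⟩
  calc (fromRel r).edgeSet.ncard
      ≤ (⋃ v, (s(v, ·)) '' {w | r v w}).ncard := ncard_le_ncard subset_arcs
    _ ≤ ∑ v, ((s(v, ·)) '' {w | r v w}).ncard := ncard_iUnion_le_of_fintype _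
    _ ≤ ∑ v, {w | r v w}.ncard := Finset.sum_le_sum fun _ _ ↦ ncard_image_le

theorem ncard_neighborSet_fromRel_le [Finite V] (r : V → V → Prop) (v : V) :
    ((fromRel r).neighborSet v).ncard ≤ {w | r v w}.ncard + {w | r w v}.ncard :=
  (ncard_le_ncard fun _ hw ↦ hw.2).trans (ncard_union_le _ _)

theorem edist_fromRel_le_one {r : V → V → Prop} {u v : V} (h : r u v) :
    (fromRel r).edist u v ≤ 1 := by
  rw [edist_le_one_iff_adj_or_eq, fromRel_adj]
  tauto

theorem edist_map_le {W : Type*} {G : SimpleGraph V} {H : SimpleGraph W} (f : G →g H) (u v : V) :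
    H.edist (f u) (f v) ≤ G.edist u v := by
  by_cases h : G.Reachable u v
  · obtain ⟨p, hp⟩ := h.exists_walk_length_eq_edist
    rw [← hp, ← p.length_map f]
    exact edist_le _
  · simp [edist_eq_top_of_not_reachable h]

theorem ediam_le_of_iso {W : Type*} {G : SimpleGraph V} {H : SimpleGraph W} (e : G ≃g H) :
    H.ediam ≤ G.ediam := by
  refine ediam_le_of_edist_le fun u v ↦ ?_
  calc H.edist u v = H.edist (e (e.symm u)) (e (e.symm v)) := by simp only [RelIso.apply_symm_apply]
    _ ≤ G.edist (e.symm u) (e.symm v) := edist_map_le e.toHom _ _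
    _ ≤ G.ediam := edist_le_ediam

theorem connected_and_dist_le_of_ediam_le [Nonempty V] {G : SimpleGraph V} {k : ℕ}
    (h : G.ediam ≤ k) : G.Connected ∧ ∀ u v, G.dist u v ≤ k :=
  ⟨connected_of_ediam_ne_top (ne_top_of_le_ne_top (ENat.natCast_ne_top k) h),
    fun _ _ ↦ ENat.toNat_le_of_le_natCast (edist_le_ediam.trans h)⟩

end Graphs

section DeBruijn

/-- The arcs `x → q x + r` (`r < q`) of the generalized de Bruijn digraph, over any semiring. -/
def DeBruijnArc {R : Type*} [Semiring R] (q : ℕ) (x y : R) : Prop := ∃ r < q, y = q * x + r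

variable {R : Type*} [Semiring R] {q : ℕ}

theorem edist_le_of_deBruijnArc {V : Type*} {G : SimpleGraph V} {f : R → V}
    (hf : ∀ x y, DeBruijnArc q x y → G.edist (f x) (f y) ≤ 1) (x : R) (m : ℕ) :
    ∀ r < q ^ m, G.edist (f x) (f (q ^ m * x + r)) ≤ m := by
  induction m with
  | zero => simp
  | succ m ih =>
    intro r hr
    have hq : 0 < q := Nat.pos_of_ne_zero fun h ↦ by simp [h] at hr
    have arc : DeBruijnArc q (q ^ m * x + (r / q : ℕ)) (q ^ (m + 1) * x + r) := by
      refine ⟨r % q, Nat.mod_lt _ hq, ?_⟩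
      conv_lhs => rw [← Nat.div_add_mod r q]
      push_cast
      rw [mul_add, ← mul_assoc, ← pow_succ', add_assoc]
    calc _ ≤ _ := SimpleGraph.edist_triangle
      _ ≤ (m : ℕ∞) + 1 :=
        add_le_add (ih (r / q) (by rwa [Nat.div_lt_iff_lt_mul hq, ← pow_succ])) (hf _ _ arc)
      _ = (m + 1 : ℕ) := by push_cast; rfl

theorem ncard_deBruijnArc_out_le (x : R) : {y | DeBruijnArc q x y}.ncard ≤ q := by
  have : {y | DeBruijnArc q x y} = (fun r : ℕ ↦ (q * x + r : R)) '' Iio q := by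
    ext y
    simp only [DeBruijnArc, mem_ofPred_eq, mem_image, mem_Iio, eq_comm]
  rw [this]
  exact (ncard_image_le (finite_Iio q)).trans (ncard_Iio_nat q).le

theorem ncard_deBruijnArc_in_le {N : ℕ} [NeZero N] [NeZero q] (hqN : q ∣ N) (y : ZMod N) :
    {x | DeBruijnArc q x y}.ncard ≤ q := by
  rcases {x | DeBruijnArc q x y}.eq_empty_or_nonempty with h | ⟨x₀, r₀, hr₀, hx₀⟩
  · simp [h]
  have sub_mem_ker : MapsTo (· - x₀) {x | DeBruijnArc q x y} {z | q • z = 0} := by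
    rintro x ⟨r, hr, hx⟩
    -- Reducing `y = q x + r` modulo `q` shows that `y` determines `r`.
    have hrr₀ : r = r₀ := by
      have := congrArg (ZMod.castHom hqN (ZMod q)) (hx.symm.trans hx₀)
      simp only [map_add, map_mul, map_natCast, ZMod.natCast_self, zero_mul, zero_add] at this
      rwa [ZMod.natCast_eq_natCast_iff', Nat.mod_eq_of_lt hr, Nat.mod_eq_of_lt hr₀] at this
    subst hrr₀
    rw [mem_ofPred_eq, nsmul_eq_mul, mul_sub, sub_eq_zero]
    exact add_right_cancel (hx.symm.trans hx₀)
  calc {x | DeBruijnArc q x y}.ncard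
      ≤ {z : ZMod N | q • z = 0}.ncard :=
        ncard_le_ncard_of_injOn _ sub_mem_ker (sub_left_injective.injOn)
    _ ≤ q := by
      classical
      rw [ncard_eq_toFinset_card', toFinset_ofPred]
      exact IsAddCyclic.card_nsmul_eq_zero_le (NeZero.pos q)

end DeBruijn

section Digits

theorem zmod_finEquiv_apply {n : ℕ} [NeZero n] (x : Fin n) : ZMod.finEquiv n x = (x : ℕ) := by
  cases n with
  | zero => exact x.elim0
  | succ n => exact (Fin.cast_val_eq_self x).symm

/-- The vertices of the generalized de Bruijn digraph, carrying one digit of size `Q` between two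
digits of size `t`. -/
abbrev Core (t Q : ℕ) : Type := ZMod (t * (Q * t))

variable {t Q : ℕ} [NeZero t] [NeZero Q]

/-- The mixed radix digits `(c, a, e)` of the residue `c (Q t) + a t + e` modulo `t (Q t)`. -/
def digits : Core t Q ≃ Fin t × Fin Q × Fin t :=
  (ZMod.finEquiv _).symm.toEquiv.trans <|
    finProdFinEquiv.symm.trans <| (Equiv.refl _).prodCongr finProdFinEquiv.symm

theorem digits_symm_apply (c e : Fin t) (a : Fin Q) :
    (digits (t := t) (Q := Q)).symm (c, a, e) =
      ((c * (Q * t) + (a * t + e) : ℕ) : Core t Q) := by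
  change ZMod.finEquiv _ (finProdFinEquiv (c, finProdFinEquiv (a, e))) = _
  rw [zmod_finEquiv_apply, finProdFinEquiv_apply_val, finProdFinEquiv_apply_val]
  congr 1
  ring

theorem castHom_eq_digits (z : Core t Q) :
    ZMod.castHom (dvd_mul_left (Q * t) t) (ZMod (Q * t)) z =
      ZMod.finEquiv _ (finProdFinEquiv (digits z).2) := by
  obtain ⟨⟨c, a, e⟩, rfl⟩ := digits.symm.surjective z
  rw [Equiv.apply_symm_apply, digits_symm_apply, zmod_finEquiv_apply, finProdFinEquiv_apply_val,
    map_natCast, Nat.cast_add, Nat.cast_mul, ZMod.natCast_self, mul_zero, zero_add]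
  congr 1
  ring

theorem exists_lt_digits_add_eq (z : Core t Q) (p : Fin Q × Fin t) :
    ∃ r < Q * t, (digits (z + r : Core t Q)).2 = p := by
  set reduce := ZMod.castHom (dvd_mul_left (Q * t) t) (ZMod (Q * t))
  set target := ZMod.finEquiv _ (finProdFinEquiv p)
  refine ⟨(target - reduce z).val, ZMod.val_lt _, ?_⟩
  apply finProdFinEquiv.injective
  apply (ZMod.finEquiv _).injective
  rw [← castHom_eq_digits, map_add, map_natCast, ZMod.natCast_zmod_val, add_sub_cancel]

theorem exists_digit_lt_digits_mul_add_eq {M : ℕ} (hM : Q ≤ M) (c : Fin t) (a : Fin Q)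
    (p : Fin Q × Fin t) :
    ∃ e : Fin t, ∃ r < M, (digits (M * digits.symm (c, a, e) + r : Core t Q)).2 = p := by
  obtain ⟨r, hr, hp⟩ := exists_lt_digits_add_eq (M * digits.symm (c, a, 0) : Core t Q) p
  have hM_pos : 0 < M := (NeZero.pos Q).trans_le hM
  have quotient_lt : r / M < t := by
    rw [Nat.div_lt_iff_lt_mul hM_pos, mul_comm]
    exact hr.trans_le (Nat.mul_le_mul_right t hM)
  refine ⟨⟨r / M, quotient_lt⟩, r % M, Nat.mod_lt r hM_pos, ?_⟩
  rw [← hp]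
  congr 2
  conv_rhs => rw [← Nat.div_add_mod r M]
  simp only [digits_symm_apply, Fin.val_zero]
  push_cast
  ring

end Digits

theorem ncard_fst_eq_or_snd_eq {α : Type*} [Finite α] (b : α) :
    {p : α × α | p.1 = b ∨ p.2 = b}.ncard = 2 * Nat.card α - 1 := by
  have union : {p : α × α | p.1 = b ∨ p.2 = b} = {b} ×ˢ univ ∪ univ ×ˢ {b} := by
    ext; simp
  have inter : ({b} ×ˢ univ ∩ univ ×ˢ {b} : Set (α × α)) = {(b, b)} := by
    ext; simp [Prod.ext_iff]
  have := ncard_union_add_ncard_inter ({b} ×ˢ univ : Set (α × α)) (univ ×ˢ {b})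
  rw [← union, inter] at this
  simp only [ncard_prod, ncard_singleton, ncard_univ] at this
  omega

section LeafyGraph

/-- The leaves of the leafy de Bruijn graph: `l` copies of each label `(a, b)`. -/
abbrev Leaf (t Q l : ℕ) : Type := (Fin Q × Fin t) × Fin l

/-- The leaf labelled `(a, b)` is attached to the core vertices `(c, a, e)` with `b ∈ {c, e}`. -/
def Leaf.Attached {t Q l : ℕ} [NeZero t] [NeZero Q] (v : Leaf t Q l)
    (x : Core t Q) : Prop :=
  (digits x).2.1 = v.1.1 ∧ ((digits x).1 = v.1.2 ∨ (digits x).2.2 = v.1.2)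

/-- The edges of the leafy de Bruijn graph, oriented so that all arcs at a leaf are outgoing. -/
def LeafyArc (t Q q l : ℕ) [NeZero t] [NeZero Q] :
    Core t Q ⊕ Leaf t Q l → Core t Q ⊕ Leaf t Q l → Prop
  | .inl x, .inl y => DeBruijnArc q x y
  | .inr v, .inl x => v.Attached x
  | _, .inr _ => False

/-- The leafy de Bruijn graph: the generalized de Bruijn graph on `Core t Q`, together with the
leaves attached to it. -/
def leafyDeBruijn (t Q q l : ℕ) [NeZero t] [NeZero Q] :
    SimpleGraph (Core t Q ⊕ Leaf t Q l) :=
  fromRel (LeafyArc t Q q l)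

variable {t Q q l : ℕ} [NeZero t] [NeZero Q]

theorem card_leafyDeBruijn :
    Fintype.card (Core t Q ⊕ Leaf t Q l) = t * (Q * t) + Q * t * l := by
  simp [ZMod.card]

theorem ncard_attached_core (v : Leaf t Q l) : {x | v.Attached x}.ncard = 2 * t - 1 := by
  have image : {x | v.Attached x} =
      (fun p : Fin t × Fin t ↦ digits.symm (p.1, v.1.1, p.2)) ''
        {p | p.1 = v.1.2 ∨ p.2 = v.1.2} := by
    ext x
    obtain ⟨⟨c, a, e⟩, rfl⟩ := digits.symm.surjective x
    simp only [Leaf.Attached, mem_ofPred_eq, mem_image, Equiv.apply_symm_apply, Prod.exists,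
      EmbeddingLike.apply_eq_iff_eq, Prod.mk.injEq]
    aesop
  rw [image, ncard_image_of_injective, ncard_fst_eq_or_snd_eq, Nat.card_eq_fintype_card,
    Fintype.card_fin]
  intro p p' h
  simpa [Prod.ext_iff] using h

theorem ncard_attached_leaf_le (x : Core t Q) :
    {v : Leaf t Q l | v.Attached x}.ncard ≤ min 2 t * l := by
  have prod : {v : Leaf t Q l | v.Attached x} =
      ({(digits x).2.1} ×ˢ {(digits x).1, (digits x).2.2}) ×ˢ univ := by
    ext
    simp [Leaf.Attached, eq_comm]
  rw [prod, ncard_prod, ncard_prod, ncard_singleton, one_mul, ncard_univ,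
    Nat.card_eq_fintype_card, Fintype.card_fin]
  gcongr
  refine le_min ((ncard_insert_le _ _).trans (by rw [ncard_singleton])) ?_
  simpa using ncard_le_ncard (subset_univ {(digits x).1, (digits x).2.2})

theorem ncard_leafyArc_core_out_le (x : Core t Q) :
    {w | LeafyArc t Q q l (.inl x) w}.ncard ≤ q := by
  simpa [ncard_setOf_sum, LeafyArc] using ncard_deBruijnArc_out_le x

theorem ncard_leafyArc_leaf_out (v : Leaf t Q l) :
    {w | LeafyArc t Q q l (.inr v) w}.ncard = 2 * t - 1 := by
  simpa [ncard_setOf_sum, LeafyArc] using ncard_attached_core v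

theorem ncard_edgeSet_leafyDeBruijn_le :
    (leafyDeBruijn t Q q l).edgeSet.ncard ≤ t * (Q * t) * q + Q * t * l * (2 * t - 1) := by
  refine (ncard_edgeSet_fromRel_le _).trans ?_
  rw [Fintype.sum_sum_type]
  gcongr
  · simpa [ZMod.card] using Finset.sum_le_card_nsmul Finset.univ _ q fun x _ ↦
      ncard_leafyArc_core_out_le (l := l) x
  · simp [ncard_leafyArc_leaf_out]

theorem ncard_neighborSet_leafyDeBruijn_le [NeZero q] (hq : q ∣ t * (Q * t)) (htq : t ≤ q)
    (hl : min 2 t * l ≤ 2 * q) (u : Core t Q ⊕ Leaf t Q l) :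
    ((leafyDeBruijn t Q q l).neighborSet u).ncard ≤ 4 * q := by
  refine (ncard_neighborSet_fromRel_le _ u).trans ?_
  rcases u with x | v
  · have out := ncard_leafyArc_core_out_le (q := q) (l := l) x
    have into : {w | LeafyArc t Q q l w (.inl x)}.ncard ≤ q + min 2 t * l := by
      rw [ncard_setOf_sum]
      exact add_le_add (ncard_deBruijnArc_in_le hq x) (ncard_attached_leaf_le x)
    omega
  · have into : {w | LeafyArc t Q q l w (.inr v)}.ncard = 0 := by simp [LeafyArc]
    rw [ncard_leafyArc_leaf_out, into]
    omega

section Distance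

theorem edist_core_le {m r : ℕ} (hr : r < q ^ m) (x : Core t Q) :
    (leafyDeBruijn t Q q l).edist (.inl x) (.inl (q ^ m * x + r : Core t Q)) ≤ m :=
  edist_le_of_deBruijnArc (fun x y (h : LeafyArc t Q q l (.inl x) (.inl y)) ↦
    edist_fromRel_le_one h) x m r hr

theorem edist_leaf_core_le_one {v : Leaf t Q l} {x : Core t Q} (h : v.Attached x) :
    (leafyDeBruijn t Q q l).edist (.inr v) (.inl x) ≤ 1 :=
  edist_fromRel_le_one (r := LeafyArc t Q q l) h

theorem edist_core_core_le {m : ℕ} (hm : t * (Q * t) ≤ q ^ m) (x y : Core t Q) :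
    (leafyDeBruijn t Q q l).edist (.inl x) (.inl y) ≤ m := by
  have hr := (ZMod.val_lt (y - q ^ m * x : Core t Q)).trans_le hm
  simpa using edist_core_le (l := l) hr x

theorem edist_core_leaf_le {m : ℕ} (hm : Q * t ≤ q ^ m) (x : Core t Q)
    (v : Leaf t Q l) : (leafyDeBruijn t Q q l).edist (.inl x) (.inr v) ≤ m + 1 := by
  obtain ⟨r, hr, hv⟩ := exists_lt_digits_add_eq (q ^ m * x : Core t Q) v.1
  have attached : v.Attached (q ^ m * x + r : Core t Q) := by simp [Leaf.Attached, hv]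
  refine SimpleGraph.edist_triangle.trans (add_le_add (edist_core_le (hr.trans_le hm) x) ?_)
  rw [SimpleGraph.edist_comm]
  exact edist_leaf_core_le_one attached

theorem edist_leaf_leaf_le {m : ℕ} (hm : Q ≤ q ^ m) (u v : Leaf t Q l) :
    (leafyDeBruijn t Q q l).edist (.inr u) (.inr v) ≤ m + 2 := by
  obtain ⟨⟨a, b⟩, i⟩ := u
  obtain ⟨e, r, hr, hv⟩ := exists_digit_lt_digits_mul_add_eq hm b a v.1
  push_cast at hv
  have leave : (leafyDeBruijn t Q q l).edist
      (.inr ((a, b), i)) (.inl (digits.symm (b, a, e))) ≤ 1 :=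
    edist_leaf_core_le_one (by simp [Leaf.Attached])
  have travel := edist_core_le (l := l) hr (digits.symm (b, a, e))
  have enter := edist_leaf_core_le_one (q := q) (v := v)
    (x := q ^ m * digits.symm (b, a, e) + r) (by simp [Leaf.Attached, hv])
  rw [SimpleGraph.edist_comm] at enter
  calc _ ≤ _ := SimpleGraph.edist_triangle
    _ ≤ (1 : ℕ∞) + (m + 1) :=
      add_le_add leave (SimpleGraph.edist_triangle.trans (add_le_add travel enter))
    _ = m + 2 := by ring

end Distance

theorem ediam_leafyDeBruijn_le {m : ℕ} (hQ : Q ≤ q ^ m) (htq : t ≤ q) :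
    (leafyDeBruijn t Q q l).ediam ≤ (m + 2 : ℕ) := by
  have hQt : Q * t ≤ q ^ (m + 1) := Nat.mul_le_mul hQ htq
  have htQt : t * (Q * t) ≤ q ^ (m + 2) :=
    (Nat.mul_le_mul htq hQt).trans_eq (pow_succ' q (m + 1)).symm
  refine ediam_le_of_edist_le ?_
  rintro (x | u) (y | v)
  · exact edist_core_core_le htQt x y
  · exact edist_core_leaf_le hQt x v
  · rw [SimpleGraph.edist_comm]
    exact edist_core_leaf_le hQt y u
  · exact edist_leaf_leaf_le hQ u v

theorem two_mul_ncard_edgeSet_leafyDeBruijn_le {d : ℕ}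
    (hd : 2 * (t * q + (2 * t - 1) * l) ≤ d * l) :
    2 * (leafyDeBruijn t Q q l).edgeSet.ncard ≤
      d * Fintype.card (Core t Q ⊕ Leaf t Q l) := by
  calc 2 * (leafyDeBruijn t Q q l).edgeSet.ncard
      ≤ 2 * (t * (Q * t) * q + Q * t * l * (2 * t - 1)) := by
        gcongr
        exact ncard_edgeSet_leafyDeBruijn_le
    _ = Q * t * (2 * (t * q + (2 * t - 1) * l)) := by ring
    _ ≤ Q * t * (d * l) := by gcongr
    _ = d * (Q * t * l) := by ring
    _ ≤ d * Fintype.card (Core t Q ⊕ Leaf t Q l) := by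
      rw [card_leafyDeBruijn]
      gcongr
      exact Nat.le_add_left _ _

end LeafyGraph

theorem exists_leafyDeBruijn_parameters {d q : ℕ} (hd : 3 ≤ d) (hq : 0 < q) (hdq : d ≤ 6 * q + 3) :
    ∃ t l : ℕ, 0 < t ∧ t ≤ q ∧ min 2 t * l ≤ 2 * q ∧
      2 * (t * q + (2 * t - 1) * l) ≤ d * l ∧ d * q ≤ 8 * (t * l) := by
  by_cases hd10 : d < 10
  · exact ⟨1, 2 * q, one_pos, hq, by simp, by nlinarith, by nlinarith⟩
  · obtain ⟨s, hs⟩ : ∃ s, s = (d - 4) / 6 := ⟨_, rfl⟩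
    refine ⟨s + 1, q, s.succ_pos, by omega, Nat.mul_le_mul_right q (min_le_left _ _), ?_, ?_⟩
    · calc 2 * ((s + 1) * q + (2 * (s + 1) - 1) * q) = (6 * s + 4) * q := by
            rw [show 2 * (s + 1) - 1 = 2 * s + 1 by omega]
            ring
        _ ≤ d * q := by gcongr; omega
    · calc d * q ≤ 8 * (s + 1) * q := by gcongr; omega
        _ = 8 * ((s + 1) * q) := mul_assoc _ _ _

theorem exists_graph_with_degree_le_four_mul {d k q : ℕ} (hd : 3 ≤ d) (hk : 3 ≤ k) (hq : 0 < q)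
    (hdq : d ≤ 6 * q + 3) :
    ∃ (V : Type) (_ : Fintype V) (_ : Nonempty V) (G : SimpleGraph V),
      2 * G.edgeSet.ncard ≤ d * Fintype.card V ∧ (∀ v, (G.neighborSet v).ncard ≤ 4 * q) ∧
      G.ediam ≤ k ∧ d * q ^ (k - 1) ≤ 8 * Fintype.card V := by
  obtain ⟨t, l, ht, htq, hl, hedges, hsize⟩ := exists_leafyDeBruijn_parameters hd hq hdq
  obtain ⟨m, rfl⟩ := Nat.exists_eq_add_of_le' hk
  have : NeZero t := ⟨ht.ne'⟩
  have : NeZero q := ⟨hq.ne'⟩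
  have q_dvd : q ∣ t * (q ^ (m + 1) * t) :=
    ((dvd_pow_self q m.succ_ne_zero).mul_right t).mul_left t
  refine ⟨_, inferInstance, ⟨.inl 0⟩, leafyDeBruijn t (q ^ (m + 1)) q l,
    two_mul_ncard_edgeSet_leafyDeBruijn_le hedges,
    ncard_neighborSet_leafyDeBruijn_le q_dvd htq hl, ediam_leafyDeBruijn_le le_rfl htq, ?_⟩
  calc d * q ^ (m + 3 - 1) = q ^ (m + 1) * (d * q) := by rw [Nat.add_sub_assoc (by simp)]; ring
    _ ≤ q ^ (m + 1) * (8 * (t * l)) := by gcongr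
    _ = 8 * (q ^ (m + 1) * t * l) := by ring
    _ ≤ _ := by
      rw [card_leafyDeBruijn]
      gcongr
      exact Nat.le_add_left _ _

theorem average_degree_lower_bound_general (d k Δ : ℕ) (hd : 3 ≤ d) (hk : 3 ≤ k) (hΔ : 4 ≤ Δ)
    (hdΔ : d ≤ Δ) :
    ∃ (n : ℕ) (G : SimpleGraph (Fin n)),
      (2 * G.edgeSet.ncard : ℚ) ≤ d * n ∧
      (∀ v, (G.neighborSet v).ncard ≤ Δ) ∧
      G.Connected ∧
      (∀ u v, G.dist u v ≤ k) ∧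
      ((d : ℚ) / 8) * ((Δ / 4 : ℕ) : ℚ) ^ (k - 1) ≤ n := by
  obtain ⟨V, _, _, G, hedges, hdeg, hdiam, hsize⟩ :=
    exists_graph_with_degree_le_four_mul (q := Δ / 4) hd hk (by omega) (by omega)
  let e : G ≃g G.overFin rfl := G.overFinIso rfl
  have : Nonempty (Fin (Fintype.card V)) := e.toEquiv.nonempty_congr.1 ‹_›
  obtain ⟨hconn, hdist⟩ := connected_and_dist_le_of_ediam_le ((ediam_le_of_iso e).trans hdiam)
  refine ⟨_, G.overFin rfl, ?_, fun v ↦ ?_, hconn, hdist, ?_⟩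
  · rw [← ncard_congr' e.mapEdgeSet]
    exact_mod_cast hedges
  · rw [ncard_congr' (e.symm.mapNeighborSet v)]
    exact (hdeg _).trans (Nat.mul_div_le Δ 4)
  · have : (d : ℚ) * ((Δ / 4 : ℕ) : ℚ) ^ (k - 1) ≤ 8 * Fintype.card V := by exact_mod_cast hsize
    linarith

/-- For all integers `d ≥ 4`, `k ≥ 3`, and `Δ ≥ 2d`, there exists a graph with
average degree at most `d`, maximum degree at most `Δ`, diameter at most `k`,
and at least `(d/8)·⌊Δ/4⌋^{k−1}` vertices. -/
theorem average_degree_lower_bound (d k Δ : ℕ) (hd : 4 ≤ d) (hk : 3 ≤ k) (hΔ : 2 * d ≤ Δ) :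
    ∃ (n : ℕ) (G : SimpleGraph (Fin n)),
      (2 * G.edgeSet.ncard : ℚ) ≤ d * n ∧
      (∀ v, (G.neighborSet v).ncard ≤ Δ) ∧
      G.Connected ∧
      (∀ u v, G.dist u v ≤ k) ∧
      ((d : ℚ) / 8) * ((Δ / 4 : ℕ) : ℚ) ^ (k - 1) ≤ n :=
  average_degree_lower_bound_general d k Δ (by omega) hk (by omega) (by omega)
end

section
/- For all even integers k ≥ 2, t ≥ 2, and Δ ≥ 4√(2t), there exists a graph with maximum degree Δ, diameter k, treewidth at most t, and at least (1/2)√(t+1)·(Δ−1)^{k/2} vertices. -/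
/-- A graph is chordal if every cycle of length at least 4 has a chord, i.e.
an edge of the graph joining two vertices of the cycle that is not an edge of
the cycle. (Equivalently, every induced cycle is a triangle.) -/
def IsChordal {V : Type*} (H : SimpleGraph V) : Prop :=
  ∀ (v : V) (c : H.Walk v v), c.IsCycle → 4 ≤ c.length →
    ∃ x y, x ∈ c.support ∧ y ∈ c.support ∧ H.Adj x y ∧ s(x, y) ∉ c.edges

/-- `G` has treewidth at most `t`: `G` is a spanning subgraph of a chordal graph
with no clique on `t + 2` vertices. -/
def TreewidthLE {V : Type*} (G : SimpleGraph V) (t : ℕ) : Prop :=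
  ∃ H : SimpleGraph V, G ≤ H ∧ IsChordal H ∧ H.CliqueFree (t + 2)

/-!
Take `d + 1` lines in general position, with `d` maximal such that the number `(d + 1).choose 2` of
intersection points is at most `t + 1`, and repeat each line about `Δ / 2` times. In the incidence
graph, any two lines are joined through a point, and each point lies on about `Δ` lines. Completing
the points to a clique makes the graph chordal with every line simplicial of degree `d`, so the
treewidth is at most `t`; adding pendant vertices changes neither fact.

For diameter 2, points on a common line are made adjacent as well, at the cost of slightly fewer
copies of each line. For diameter `2 * h` with `h ≥ 2`, every line receives pendant vertices up to
degree `Δ`, and then every leaf does so, `h - 1` rounds in total. Two lines are at distance at most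
2, so give lines depth 1, points depth 2 and leaves of round `i` depth `i + 1`: the distance between
two vertices is then at most the sum of their depths.

The resulting order is about `(d + 1) * (Δ / 2) * (Δ - d) * (Δ - 1) ^ (h - 2)`; the hypothesis
`4 * √(2 * t) ≤ Δ` enters through `√(t + 1) * (Δ - 1) ≤ (d + 1) * (Δ - d)`.
-/

open SimpleGraph

section SimplicialDegenerate

variable {V W : Type*} {G H : SimpleGraph V} {t : ℕ}

/-- Every nonempty finite set of vertices contains a vertex whose neighbours inside the set form a
clique of size at most `t`. For finite graphs this says that `H` is chordal with clique number at
most `t + 1`; unlike chordality, it passes to gluings without any manipulation of cycles. -/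
def SimplicialDegenerate (H : SimpleGraph V) (t : ℕ) : Prop :=
  ∀ s : Finset V, s.Nonempty →
    ∃ v ∈ s, H.IsClique (↑s ∩ H.neighborSet v) ∧ (↑s ∩ H.neighborSet v).encard ≤ t

lemma snd_penultimate_notMem_edges {v : V} {c : H.Walk v v} (hc : c.IsCycle)
    (hlen : 4 ≤ c.length) : s(c.snd, c.penultimate) ∉ c.edges := by
  intro hmem
  have hnbr : c.penultimate ∈ c.toSubgraph.neighborSet c.snd := by
    rwa [Subgraph.mem_neighborSet, Walk.adj_toSubgraph_iff_mem_edges]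
  rw [hc.neighborSet_toSubgraph_internal one_ne_zero (by lia)] at hnbr
  rcases hnbr with h | h
  · exact (c.adj_penultimate hc.not_nil).ne (by simpa using h)
  · have : c.length - 1 = 2 :=
      hc.getVert_injOn ⟨by lia, by lia⟩ ⟨by lia, by lia⟩ h
    lia

namespace SimplicialDegenerate

lemma isChordal (h : SimplicialDegenerate H t) : IsChordal H := by
  classical
  -- The chord joins the two neighbours along `c` of a simplicial vertex of the support of `c`.
  intro v c hc hlen
  obtain ⟨m, hm, hclique, -⟩ := h c.support.toFinset ⟨v, by simp⟩
  rw [List.mem_toFinset] at hm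
  have hc' : (c.rotate m hm).IsCycle := hc.rotate hm
  have mem_support (i : ℕ) : (c.rotate m hm).getVert i ∈ c.support :=
    (c.mem_support_rotate_iff m hm).1 (Walk.getVert_mem_support _ i)
  have hadj : H.Adj (c.rotate m hm).snd (c.rotate m hm).penultimate :=
    hclique ⟨by simpa using mem_support 1, Walk.adj_snd hc'.not_nil⟩
      ⟨by simpa using mem_support _, (Walk.adj_penultimate hc'.not_nil).symm⟩ hc'.snd_ne_penultimate
  refine ⟨_, _, mem_support 1, mem_support _, hadj, fun hmem => ?_⟩
  exact snd_penultimate_notMem_edges hc' (by simpa using hlen)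
    ((c.rotate_edges m hm).mem_iff.2 hmem)

lemma cliqueFree (h : SimplicialDegenerate H t) : H.CliqueFree (t + 2) := by
  classical
  intro s hs
  obtain ⟨v, hv, -, hle⟩ := h s (Finset.card_pos.1 (by simp [hs.card_eq]))
  have hsub : (↑(s.erase v) : Set V) ⊆ ↑s ∩ H.neighborSet v := fun x hx => by
    obtain ⟨hxv, hxs⟩ := Finset.mem_erase.1 hx
    exact ⟨hxs, hs.isClique hv hxs hxv.symm⟩
  have hcard := (Set.encard_le_encard hsub).trans hle
  rw [Set.encard_coe_eq_coe_finsetCard, Nat.cast_le, Finset.card_erase_of_mem hv,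
    hs.card_eq] at hcard
  lia

lemma treewidthLE (h : SimplicialDegenerate H t) (hGH : G ≤ H) : TreewidthLE G t :=
  ⟨H, hGH, h.isChordal, h.cliqueFree⟩

lemma comap (h : SimplicialDegenerate H t) (f : W ↪ V) : SimplicialDegenerate (H.comap f) t := by
  intro s hs
  obtain ⟨_, hv, hclique, hcard⟩ := h (s.map f) (hs.map)
  obtain ⟨v, hvs, rfl⟩ := Finset.mem_map.1 hv
  have himage : f '' (↑s ∩ (H.comap f).neighborSet v) ⊆ ↑(s.map f) ∩ H.neighborSet (f v) := by
    rintro _ ⟨x, ⟨hxs, hx⟩, rfl⟩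
    exact ⟨Finset.mem_map_of_mem f hxs, hx⟩
  refine ⟨v, hvs, fun x hx y hy hxy => ?_, ?_⟩
  · exact hclique (himage ⟨x, hx, rfl⟩) (himage ⟨y, hy, rfl⟩) (f.injective.ne hxy)
  · rw [← f.injective.encard_image]
    exact (Set.encard_le_encard himage).trans hcard

end SimplicialDegenerate

lemma simplicialDegenerate_top [Finite V] (hV : Nat.card V ≤ t + 1) :
    SimplicialDegenerate (⊤ : SimpleGraph V) t := by
  classical
  rintro s ⟨v, hv⟩
  have hsub : ↑s ∩ (⊤ : SimpleGraph V).neighborSet v ⊆ ↑(s.erase v) := fun x hx =>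
    Finset.mem_erase.2 ⟨Ne.symm hx.2, hx.1⟩
  refine ⟨v, hv, .top _, (Set.encard_le_encard hsub).trans ?_⟩
  rw [Set.encard_coe_eq_coe_finsetCard, Nat.cast_le, Finset.card_erase_of_mem hv]
  have : s.card ≤ Nat.card V := Set.ncard_coe_finset s ▸ Set.ncard_le_card (s : Set V)
  lia

end SimplicialDegenerate

section edist

variable {V W : Type*} {G : SimpleGraph V} {G' : SimpleGraph W}

lemma edist_hom_le (f : G →g G') (u v : V) : G'.edist (f u) (f v) ≤ G.edist u v := by
  by_cases h : G.edist u v = ⊤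
  · exact h ▸ le_top
  · obtain ⟨w, hw⟩ := exists_walk_of_edist_ne_top h
    rw [← hw, ← w.length_map f]
    exact (w.map f).edist_le

lemma edist_le_add_of_edist_le (f : V → W) {ε : W → ℕ} {δ : V → ℕ} (r : W → V)
    (hr : ∀ x, G'.edist x (f (r x)) ≤ ε x)
    (hf : ∀ u v, G'.edist (f u) (f v) ≤ (δ u + δ v : ℕ)) (x y : W) :
    G'.edist x y ≤ ((ε x + δ (r x)) + (ε y + δ (r y)) : ℕ) := by
  calc G'.edist x y
      ≤ G'.edist x (f (r x)) + G'.edist (f (r x)) (f (r y)) + G'.edist (f (r y)) y :=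
        SimpleGraph.edist_triangle.trans (add_le_add_left SimpleGraph.edist_triangle _)
    _ ≤ ε x + (δ (r x) + δ (r y) : ℕ) + ε y := by
        gcongr
        exacts [hr x, hf _ _, SimpleGraph.edist_comm.trans_le (hr y)]
    _ = ((ε x + δ (r x)) + (ε y + δ (r y)) : ℕ) := by push_cast; ring

end edist

section attachVertices

variable {V W : Type*} {G H : SimpleGraph V} {N : W → Set V} {t : ℕ}

/-- The graph obtained from `G` by adding an independent set `W` of new vertices and joining each
`w : W` to the vertices in `N w`. -/
def attachVertices (G : SimpleGraph V) (N : W → Set V) : SimpleGraph (V ⊕ W) where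
  Adj
    | .inl u, .inl v => G.Adj u v
    | .inl u, .inr w => u ∈ N w
    | .inr w, .inl u => u ∈ N w
    | .inr _, .inr _ => False
  symm.symm
    | .inl _, .inl _, h => h.symm
    | .inl _, .inr _, h => h
    | .inr _, .inl _, h => h
  loopless.irrefl
    | .inl _, h => G.irrefl h

lemma attachVertices_mono (h : G ≤ H) : attachVertices G N ≤ attachVertices H N
  | .inl _, .inl _, huv => h huv
  | .inl _, .inr _, hvw => hvw
  | .inr _, .inl _, hvw => hvw

lemma neighborSet_attachVertices_inl (v : V) : (attachVertices G N).neighborSet (.inl v) =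
    Sum.inl '' G.neighborSet v ∪ Sum.inr '' {w | v ∈ N w} := by
  ext (x | x) <;> simp [attachVertices]

lemma neighborSet_attachVertices_inr (w : W) :
    (attachVertices G N).neighborSet (.inr w) = Sum.inl '' N w := by
  ext (x | x) <;> simp [attachVertices]

lemma ncard_neighborSet_attachVertices_inl_le (v : V) :
    ((attachVertices G N).neighborSet (.inl v)).ncard ≤
      (G.neighborSet v).ncard + {w | v ∈ N w}.ncard := by
  rw [neighborSet_attachVertices_inl]
  refine (Set.ncard_union_le _ _).trans_eq ?_
  rw [Set.ncard_image_of_injective _ Sum.inl_injective,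
    Set.ncard_image_of_injective _ Sum.inr_injective]

lemma ncard_neighborSet_attachVertices_inr (w : W) :
    ((attachVertices G N).neighborSet (.inr w)).ncard = (N w).ncard := by
  rw [neighborSet_attachVertices_inr, Set.ncard_image_of_injective _ Sum.inl_injective]

lemma edist_attachVertices_inl_le (u v : V) :
    (attachVertices G N).edist (.inl u) (.inl v) ≤ G.edist u v :=
  edist_hom_le (G' := attachVertices G N) ⟨Sum.inl, id⟩ u v

lemma edist_attachVertices_inr_inl_le_one {v : V} {w : W} (h : v ∈ N w) :
    (attachVertices G N).edist (.inr w) (.inl v) ≤ 1 :=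
  edist_le_one_iff_adj_or_eq.2 (.inl h)

lemma simplicialDegenerate_attachVertices (hH : SimplicialDegenerate H t)
    (hclique : ∀ w, H.IsClique (N w)) (hcard : ∀ w, (N w).encard ≤ t) :
    SimplicialDegenerate (attachVertices H N) t := by
  classical
  intro s hs
  by_cases hW : ∃ w, .inr w ∈ s
  · obtain ⟨w, hw⟩ := hW
    have hsub : ↑s ∩ (attachVertices H N).neighborSet (.inr w) ⊆ Sum.inl '' N w :=
      Set.inter_subset_right.trans (neighborSet_attachVertices_inr w).subset
    refine ⟨.inr w, hw, IsClique.subset hsub ?_, (Set.encard_le_encard hsub).trans ?_⟩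
    · rintro _ ⟨x, hx, rfl⟩ _ ⟨y, hy, rfl⟩ hxy
      exact hclique w hx hy (ne_of_apply_ne _ hxy)
    · exact (Set.encard_image_le _ _).trans (hcard w)
  · have hsV : s.toLeft.map .inl = s := by
      ext (x | x) <;> simp_all
    rw [← hsV] at hs ⊢
    obtain ⟨v, hv, hclique, hle⟩ := hH s.toLeft (by simpa using hs)
    have himage : ↑(s.toLeft.map (.inl : V ↪ V ⊕ W)) ∩ (attachVertices H N).neighborSet (.inl v) =
        Sum.inl '' (↑s.toLeft ∩ H.neighborSet v) := by
      ext (x | x) <;> simp [attachVertices]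
    refine ⟨.inl v, Finset.mem_map_of_mem _ hv, ?_, ?_⟩ <;> rw [himage]
    · rintro _ ⟨x, hx, rfl⟩ _ ⟨y, hy, rfl⟩ hxy
      exact hclique hx hy (ne_of_apply_ne _ hxy)
    · rwa [Sum.inl_injective.encard_image]

end attachVertices

section incidence

variable {V : Type*} {K : SimpleGraph V} {d t m : ℕ}

/-- The edges of `K` incident to `a`, as a set of vertices of the line graph of `K`. -/
def edgesAt (K : SimpleGraph V) (a : V) : Set K.edgeSet :=
  {e | a ∈ e.1}

lemma ncard_edgesAt (a : V) : (edgesAt K a).ncard = (K.neighborSet a).ncard := by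
  classical
  have himage : Subtype.val '' edgesAt K a = K.incidenceSet a := by
    ext e
    simp [edgesAt, incidenceSet, and_comm]
  rw [← Set.ncard_image_of_injective _ Subtype.val_injective, himage]
  exact Nat.card_congr (K.incidenceSetEquivNeighborSet a)

lemma exists_mem_edgesAt_top [Nontrivial V] (a b : V) :
    ∃ e, e ∈ edgesAt ⊤ a ∧ e ∈ edgesAt ⊤ b := by
  by_cases hab : a = b
  · obtain ⟨c, hc⟩ := exists_ne a
    exact ⟨⟨s(a, c), hc.symm⟩, Sym2.mem_mk_left a c, hab ▸ Sym2.mem_mk_left a c⟩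
  · exact ⟨⟨s(a, b), hab⟩, Sym2.mem_mk_left a b, Sym2.mem_mk_right a b⟩

lemma ncard_neighborSet_top [Finite V] (a : V) :
    ((⊤ : SimpleGraph V).neighborSet a).ncard = Nat.card V - 1 := by
  rw [neighborSet_top, Set.ncard_compl, Set.ncard_singleton]

lemma card_edgeSet_top [Finite V] :
    Nat.card (⊤ : SimpleGraph V).edgeSet = (Nat.card V).choose 2 := by
  classical
  have := Fintype.ofFinite V
  rw [Nat.card_eq_fintype_card, Nat.card_eq_fintype_card, ← edgeFinset_card,
    card_edgeFinset_top_eq_card_choose_two]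

lemma ncard_neighborSet_lineGraph_le [Finite V] (hK : ∀ a, (K.neighborSet a).ncard ≤ d)
    (e : K.edgeSet) : (K.lineGraph.neighborSet e).ncard ≤ 2 * (d - 1) := by
  obtain ⟨⟨a, b⟩, he⟩ := e
  have hsub : K.lineGraph.neighborSet ⟨s(a, b), he⟩ ⊆
      edgesAt K a \ {⟨s(a, b), he⟩} ∪ edgesAt K b \ {⟨s(a, b), he⟩} := by
    rintro f hf
    obtain ⟨hne, c, hc, hcf⟩ := lineGraph_adj_iff_exists.1 hf
    rcases Sym2.mem_iff.1 hc with rfl | rfl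
    · exact .inl ⟨hcf, hne.symm⟩
    · exact .inr ⟨hcf, hne.symm⟩
  have ncard_diff (c : V) (hc : c ∈ s(a, b)) :
      (edgesAt K c \ {⟨s(a, b), he⟩}).ncard ≤ d - 1 := by
    rw [Set.ncard_sdiff_singleton_of_mem (show ⟨s(a, b), he⟩ ∈ edgesAt K c from hc),
      ncard_edgesAt]
    exact Nat.sub_le_sub_right (hK c) 1
  calc (K.lineGraph.neighborSet ⟨s(a, b), he⟩).ncard
      ≤ (edgesAt K a \ {⟨s(a, b), he⟩}).ncard + (edgesAt K b \ {⟨s(a, b), he⟩}).ncard :=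
        (Set.ncard_le_ncard hsub).trans (Set.ncard_union_le _ _)
    _ ≤ 2 * (d - 1) := by
        rw [two_mul]
        exact add_le_add (ncard_diff a (Sym2.mem_mk_left a b))
          (ncard_diff b (Sym2.mem_mk_right a b))

/-- The graph `R` on the edges of `K`, together with `m` copies of each vertex of `K`, a copy of `a`
being joined to the edges incident to `a`. For complete `K` this is the incidence graph of lines in
general position and their intersection points, with each line repeated `m` times. -/
def incidenceBlowup (R : SimpleGraph K.edgeSet) (m : ℕ) : SimpleGraph (K.edgeSet ⊕ V × Fin m) :=
  attachVertices R fun w => edgesAt K w.1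

lemma ncard_neighborSet_incidenceBlowup_inl_le (R : SimpleGraph K.edgeSet) (e : K.edgeSet) :
    ((incidenceBlowup R m).neighborSet (.inl e)).ncard ≤ (R.neighborSet e).ncard + 2 * m := by
  refine (ncard_neighborSet_attachVertices_inl_le e).trans (Nat.add_le_add_left ?_ _)
  obtain ⟨⟨a, b⟩, he⟩ := e
  have hprod : {w : V × Fin m | ⟨s(a, b), he⟩ ∈ edgesAt K w.1} = {a, b} ×ˢ Set.univ := by
    ext w
    simp [edgesAt]
  rw [hprod, Set.ncard_prod, Set.ncard_univ, Nat.card_fin]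
  exact Nat.mul_le_mul_right m ((Set.ncard_insert_le a {b}).trans_eq (by rw [Set.ncard_singleton]))

lemma ncard_neighborSet_incidenceBlowup_inr (R : SimpleGraph K.edgeSet) (w : V × Fin m) :
    ((incidenceBlowup R m).neighborSet (.inr w)).ncard = (K.neighborSet w.1).ncard :=
  (ncard_neighborSet_attachVertices_inr w).trans (ncard_edgesAt w.1)

lemma simplicialDegenerate_incidenceBlowup_top [Finite V] (hcard : Nat.card K.edgeSet ≤ t + 1)
    (hK : ∀ a, (K.neighborSet a).ncard ≤ t) :
    SimplicialDegenerate (incidenceBlowup (⊤ : SimpleGraph K.edgeSet) m) t := by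
  refine simplicialDegenerate_attachVertices (simplicialDegenerate_top hcard)
    (fun _ => .top _) fun w => ?_
  rw [← (Set.toFinite _).cast_ncard_eq, ncard_edgesAt]
  exact_mod_cast hK w.1

lemma edist_incidenceBlowup_inr_le_two [Nontrivial V]
    (R : SimpleGraph (⊤ : SimpleGraph V).edgeSet) (w w' : V × Fin m) :
    (incidenceBlowup R m).edist (.inr w) (.inr w') ≤ 2 := by
  obtain ⟨e, he, he'⟩ := exists_mem_edgesAt_top w.1 w'.1
  calc (incidenceBlowup R m).edist (.inr w) (.inr w')
      ≤ (incidenceBlowup R m).edist (.inr w) (.inl e) +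
          (incidenceBlowup R m).edist (.inl e) (.inr w') := SimpleGraph.edist_triangle
    _ ≤ 1 + 1 := add_le_add (edist_attachVertices_inr_inl_le_one he)
        (SimpleGraph.edist_comm.trans_le (edist_attachVertices_inr_inl_le_one he'))
    _ = 2 := one_add_one_eq_two

lemma edist_incidenceBlowup_le [Nontrivial V] [NeZero m]
    (R : SimpleGraph (⊤ : SimpleGraph V).edgeSet)
    (x y : (⊤ : SimpleGraph V).edgeSet ⊕ V × Fin m) :
    (incidenceBlowup R m).edist x y ≤
      (Sum.elim (fun _ => 2) (fun _ => 1) x + Sum.elim (fun _ => 2) (fun _ => 1) y : ℕ) := by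
  have near_line : ∀ x,
      (incidenceBlowup R m).edist x (.inr (Sum.elim (fun e => (e.1.out.1, 0)) id x)) ≤
        (Sum.elim (fun _ => 1) (fun _ => 0) x : ℕ)
    | .inl e => SimpleGraph.edist_comm.trans_le
        (edist_attachVertices_inr_inl_le_one (Sym2.out_fst_mem e.1))
    | .inr w => edist_self.le
  have h := edist_le_add_of_edist_le (G' := incidenceBlowup R m) Sum.inr (δ := fun _ => 1) _
    near_line (edist_incidenceBlowup_inr_le_two R) x y
  rcases x with x | x <;> rcases y with y | y <;> exact h

lemma edist_incidenceBlowup_lineGraph_le_two [Nontrivial V]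
    (x y : (⊤ : SimpleGraph V).edgeSet ⊕ V × Fin m) :
    (incidenceBlowup (⊤ : SimpleGraph V).lineGraph m).edist x y ≤ 2 := by
  set G := incidenceBlowup (⊤ : SimpleGraph V).lineGraph m
  have exists_foot : ∀ x, ∃ a, ∀ f ∈ edgesAt ⊤ a, G.edist x (.inl f) ≤ 1
    | .inl e => ⟨e.1.out.1, fun f hf => (edist_attachVertices_inl_le e f).trans <|
        edist_le_one_iff_adj_or_eq.2 <| or_iff_not_imp_right.2 fun hef =>
          lineGraph_adj_iff_exists.2 ⟨hef, _, Sym2.out_fst_mem e.1, hf⟩⟩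
    | .inr w => ⟨w.1, fun _ hf => edist_attachVertices_inr_inl_le_one hf⟩
  obtain ⟨a, ha⟩ := exists_foot x
  obtain ⟨b, hb⟩ := exists_foot y
  obtain ⟨e, hea, heb⟩ := exists_mem_edgesAt_top a b
  calc G.edist x y ≤ G.edist x (.inl e) + G.edist (.inl e) y := SimpleGraph.edist_triangle
    _ ≤ 1 + 1 := add_le_add (ha e hea) (SimpleGraph.edist_comm.trans_le (hb e heb))
    _ = 2 := one_add_one_eq_two

end incidence

section IsGrowable

universe u

variable {V : Type u} {G : SimpleGraph V} {L : Set V} {δ : V → ℕ} {Δ t h d q : ℕ}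

/-- The invariants kept while growing `G` by pendant vertices at the vertices of `L`: maximum degree
at most `Δ`, a completion witnessing treewidth at most `t`, degree at most `d` on `L`, and a
function `δ` such that `G.edist u v ≤ δ u + δ v`, bounded by `h` on `L` and by `max h 2`
elsewhere. -/
structure IsGrowable (G : SimpleGraph V) (L : Set V) (δ : V → ℕ) (Δ t h d : ℕ) : Prop where
  degree_le : ∀ v, (G.neighborSet v).ncard ≤ Δ
  degree_le_of_mem : ∀ v ∈ L, (G.neighborSet v).ncard ≤ d
  edist_le : ∀ u v, G.edist u v ≤ (δ u + δ v : ℕ)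
  depth_le : ∀ v, δ v ≤ max h 2
  depth_le_of_mem : ∀ v ∈ L, δ v ≤ h
  exists_completion : ∃ H, G ≤ H ∧ SimplicialDegenerate H t

lemma ncard_setOf_fst_eq_le (L : Set V) (q : ℕ) (v : V) :
    {w : L × Fin q | v = w.1.1}.ncard ≤ q := by
  have hinj : Set.InjOn Prod.snd {w : L × Fin q | v = w.1.1} := fun x hx y hy hxy =>
    Prod.ext (Subtype.ext (hx.symm.trans hy)) hxy
  rw [← hinj.ncard_image]
  simpa using Set.ncard_le_card (Prod.snd '' {w : L × Fin q | v = w.1.1})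

namespace IsGrowable

lemma attachPendants (hG : IsGrowable G L δ Δ t h d) (ht : 1 ≤ t) (hdq : d + q ≤ Δ)
    (hΔ : 1 ≤ Δ) :
    IsGrowable (attachVertices G fun w : L × Fin q => {w.1.1}) (Set.range .inr)
      (Sum.elim δ fun w => δ w.1 + 1) Δ t (h + 1) 1 where
  degree_le := by
    rintro (v | w)
    · refine (ncard_neighborSet_attachVertices_inl_le v).trans ?_
      by_cases hv : v ∈ L
      · exact (add_le_add (hG.degree_le_of_mem v hv) (ncard_setOf_fst_eq_le L q v)).trans hdq
      · have hempty : {w : L × Fin q | v ∈ ({w.1.1} : Set V)} = ∅ :=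
          Set.eq_empty_of_forall_notMem fun w hw => hv (hw ▸ w.1.2)
        rw [hempty, Set.ncard_empty, add_zero]
        exact hG.degree_le v
    · rwa [ncard_neighborSet_attachVertices_inr, Set.ncard_singleton]
  degree_le_of_mem := by
    rintro _ ⟨w, rfl⟩
    rw [ncard_neighborSet_attachVertices_inr, Set.ncard_singleton]
  edist_le x y := by
    have near_parent : ∀ x, (attachVertices G fun w : L × Fin q => {w.1.1}).edist x
        (.inl (Sum.elim id (fun w => w.1.1) x)) ≤ (Sum.elim (fun _ => 0) (fun _ => 1) x : ℕ)
      | .inl v => edist_self.le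
      | .inr w => edist_attachVertices_inr_inl_le_one rfl
    have hxy := edist_le_add_of_edist_le .inl _ near_parent
      (fun u v => (edist_attachVertices_inl_le u v).trans (hG.edist_le u v)) x y
    rcases x with x | x <;> rcases y with y | y <;> simpa [add_comm] using hxy
  depth_le := by
    rintro (v | w)
    · exact (hG.depth_le v).trans (max_le_max_right 2 h.le_succ)
    · exact le_max_of_le_left (Nat.succ_le_succ (hG.depth_le_of_mem _ w.1.2))
  depth_le_of_mem := by
    rintro _ ⟨w, rfl⟩
    exact Nat.succ_le_succ (hG.depth_le_of_mem _ w.1.2)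
  exists_completion := by
    obtain ⟨H, hGH, hH⟩ := hG.exists_completion
    refine ⟨_, attachVertices_mono hGH, simplicialDegenerate_attachVertices hH
      (fun _ => IsClique.of_subsingleton Set.subsingleton_singleton) fun _ => ?_⟩
    rw [Set.encard_singleton]
    exact_mod_cast ht

lemma exists_iterate [Finite V] [Nonempty V] (hG : IsGrowable G L δ Δ t h d) (ht : 1 ≤ t)
    (hd : d ≤ Δ) (hΔ : 1 ≤ Δ) (j : ℕ) :
    ∃ (W : Type u) (_ : Finite W) (_ : Nonempty W) (G' : SimpleGraph W) (L' : Set W)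
      (δ' : W → ℕ),
      IsGrowable G' L' δ' Δ t (h + 1 + j) 1 ∧
        L'.ncard = L.ncard * (Δ - d) * (Δ - 1) ^ j := by
  have ncard_pendants {U : Type u} (M : Set U) (q : ℕ) :
      (Set.range (.inr : M × Fin q → U ⊕ M × Fin q)).ncard = M.ncard * q := by
    rw [Set.ncard_range_of_injective Sum.inr_injective, Nat.card_prod, Nat.card_coe_set_eq,
      Nat.card_fin]
  induction j with
  | zero =>
    refine ⟨_, inferInstance, inferInstance, _, _, _,
      hG.attachPendants ht (Nat.add_sub_cancel' hd).le hΔ, ?_⟩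
    rw [ncard_pendants, pow_zero, mul_one]
  | succ j ih =>
    obtain ⟨W, _, _, G', L', δ', hG', hcard⟩ := ih
    refine ⟨_, inferInstance, inferInstance, _, _, _,
      hG'.attachPendants ht (Nat.add_sub_cancel' hΔ).le hΔ, ?_⟩
    rw [ncard_pendants, hcard, pow_succ, mul_assoc]

end IsGrowable

lemma isGrowable_incidenceBlowup_bot [Finite V] [Nontrivial V] {m : ℕ} [NeZero m]
    (hVt : Nat.card V - 1 ≤ t) (hVΔ : Nat.card V - 1 ≤ Δ)
    (hcard : (Nat.card V).choose 2 ≤ t + 1) (hm : 2 * m ≤ Δ) :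
    IsGrowable (incidenceBlowup (⊥ : SimpleGraph (⊤ : SimpleGraph V).edgeSet) m)
      (Set.range .inr) (Sum.elim (fun _ => 2) fun _ => 1) Δ t 1 (Nat.card V - 1) where
  degree_le := by
    rintro (e | w)
    · refine (ncard_neighborSet_incidenceBlowup_inl_le ⊥ e).trans ?_
      simpa using hm
    · rwa [ncard_neighborSet_incidenceBlowup_inr, ncard_neighborSet_top]
  degree_le_of_mem := by
    rintro _ ⟨w, rfl⟩
    rw [ncard_neighborSet_incidenceBlowup_inr, ncard_neighborSet_top]
  edist_le := edist_incidenceBlowup_le ⊥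
  depth_le := by rintro (_ | _) <;> simp
  depth_le_of_mem := by rintro _ ⟨w, rfl⟩; rfl
  exists_completion := ⟨_, attachVertices_mono bot_le,
    simplicialDegenerate_incidenceBlowup_top (by rwa [card_edgeSet_top])
      fun a => (ncard_neighborSet_top a).trans_le hVt⟩

end IsGrowable

section HasGraphOfOrder

variable {Δ k t d : ℕ}

/-- There is a connected graph on `n` vertices with maximum degree at most `Δ`, diameter at most `k`
and treewidth at most `t`. -/
def HasGraphOfOrder (Δ k t n : ℕ) : Prop :=
  ∃ G : SimpleGraph (Fin n), (∀ v, (G.neighborSet v).ncard ≤ Δ) ∧ G.Connected ∧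
    (∀ u v, G.dist u v ≤ k) ∧ TreewidthLE G t

lemma hasGraphOfOrder_natCard {V : Type*} [Finite V] [Nonempty V] {G H : SimpleGraph V}
    (hdeg : ∀ v, (G.neighborSet v).ncard ≤ Δ) (hedist : ∀ u v, G.edist u v ≤ k) (hGH : G ≤ H)
    (hH : SimplicialDegenerate H t) : HasGraphOfOrder Δ k t (Nat.card V) := by
  let f : Fin (Nat.card V) ≃ V := (Finite.equivFin V).symm
  let φ : G.comap f ≃g G := Iso.comap f G
  have hedist' (u v) : (G.comap f).edist u v ≤ k := by
    simpa using (edist_hom_le φ.symm.toHom (φ u) (φ v)).trans (hedist _ _)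
  have hreach (u v) : (G.comap f).Reachable u v :=
    edist_ne_top_iff_reachable.1 ((hedist' u v).trans_lt (ENat.natCast_lt_top k)).ne
  have : Nonempty (Fin (Nat.card V)) := f.nonempty
  refine ⟨G.comap f, fun v => ?_, ⟨hreach⟩, fun u v => ?_,
    (hH.comap f.toEmbedding).treewidthLE fun _ _ huv => hGH huv⟩
  · exact (Nat.card_congr (φ.mapNeighborSet v)).trans_le (hdeg _)
  · have := (hreach u v).coe_dist_eq_edist.trans_le (hedist' u v)
    exact_mod_cast this

lemma hasGraphOfOrder_two {m : ℕ} (hd : 1 ≤ d) (hdt : d ≤ t) (hcard : (d + 1).choose 2 ≤ t + 1)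
    (hdΔ : d ≤ Δ) (hm : 2 * (d - 1) + 2 * m ≤ Δ) :
    HasGraphOfOrder Δ 2 t ((d + 1).choose 2 + (d + 1) * m) := by
  have : Nontrivial (Fin (d + 1)) := Fin.nontrivial_iff_two_le.2 (by lia)
  have hV : Nat.card (Fin (d + 1)) = d + 1 := Nat.card_fin _
  have degree_top (a) : ((⊤ : SimpleGraph (Fin (d + 1))).neighborSet a).ncard = d := by
    rw [ncard_neighborSet_top, hV, Nat.add_sub_cancel]
  let G := incidenceBlowup (⊤ : SimpleGraph (Fin (d + 1))).lineGraph m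
  have hdeg : ∀ v, (G.neighborSet v).ncard ≤ Δ
    | .inl e => (ncard_neighborSet_incidenceBlowup_inl_le _ e).trans <|
        (Nat.add_le_add_right
          (ncard_neighborSet_lineGraph_le (fun a => (degree_top a).le) e) _).trans hm
    | .inr w => (ncard_neighborSet_incidenceBlowup_inr _ w).trans_le
        ((degree_top w.1).trans_le hdΔ)
  have : Nonempty (⊤ : SimpleGraph (Fin (d + 1))).edgeSet :=
    (exists_mem_edgesAt_top 0 0).nonempty
  have hG := hasGraphOfOrder_natCard (G := G) hdeg edist_incidenceBlowup_lineGraph_le_two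
    (attachVertices_mono le_top) (simplicialDegenerate_incidenceBlowup_top
      (by rwa [card_edgeSet_top, hV]) fun a => (degree_top a).trans_le hdt)
  rwa [Nat.card_sum, card_edgeSet_top, Nat.card_prod, hV, Nat.card_fin] at hG

lemma exists_hasGraphOfOrder_two_mul {m : ℕ} (hd : 1 ≤ d) (hdt : d ≤ t)
    (hcard : (d + 1).choose 2 ≤ t + 1) (hdΔ : d ≤ Δ) (hm : m ≠ 0) (hmΔ : 2 * m ≤ Δ) (j : ℕ) :
    ∃ n, (d + 1) * m * (Δ - d) * (Δ - 1) ^ j ≤ n ∧ HasGraphOfOrder Δ (2 * (j + 2)) t n := by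
  have : NeZero m := ⟨hm⟩
  have : Nontrivial (Fin (d + 1)) := Fin.nontrivial_iff_two_le.2 (by lia)
  have hV : Nat.card (Fin (d + 1)) = d + 1 := Nat.card_fin _
  have hbase := isGrowable_incidenceBlowup_bot (V := Fin (d + 1)) (Δ := Δ) (t := t) (m := m)
  simp only [hV, Nat.add_sub_cancel] at hbase
  obtain ⟨W, _, _, G, L, δ, hG, hL⟩ := (hbase hdt hdΔ hcard hmΔ).exists_iterate
    (hd.trans hdt) hdΔ (hd.trans hdΔ) j
  obtain ⟨H, hGH, hH⟩ := hG.exists_completion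
  have hedist (u v) : G.edist u v ≤ (2 * (j + 2) : ℕ) := by
    refine (hG.edist_le u v).trans (Nat.cast_le.2 ?_)
    have hu := hG.depth_le u
    have hv := hG.depth_le v
    lia
  refine ⟨Nat.card W, ?_, hasGraphOfOrder_natCard hG.degree_le hedist hGH hH⟩
  rw [Set.ncard_range_of_injective Sum.inr_injective, Nat.card_prod, hV,
    Nat.card_fin] at hL
  exact hL ▸ Set.ncard_le_card L

end HasGraphOfOrder

section counting

variable {d t Δ : ℕ}

lemma two_mul_choose_two (d : ℕ) : 2 * (d + 1).choose 2 = (d + 1) * d := by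
  rw [Nat.choose_two_right, Nat.add_sub_cancel, mul_comm (d + 1)]
  exact Nat.mul_div_cancel' (Nat.even_mul_succ_self d).two_dvd

lemma exists_choose_two_le_lt (n : ℕ) : ∃ d, (d + 1).choose 2 ≤ n ∧ n < (d + 2).choose 2 := by
  have hn : ∃ d, n < (d + 2).choose 2 := ⟨n, by have := two_mul_choose_two (n + 1); nlinarith⟩
  refine ⟨Nat.find hn, ?_, Nat.find_spec hn⟩
  rcases hfind : Nat.find hn with _ | d
  · simp
  · exact not_lt.1 (Nat.find_min hn (hfind ▸ d.lt_succ_self))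

lemma exists_sq_le_choose_two_le_lt (ht : 1 ≤ t) :
    ∃ d, 1 ≤ d ∧ d ^ 2 ≤ 2 * t ∧ (d + 1).choose 2 ≤ t + 1 ∧ t + 1 < (d + 2).choose 2 := by
  obtain ⟨d, hle, hlt⟩ := exists_choose_two_le_lt (t + 1)
  have hd : 1 ≤ d := by
    by_contra! hd
    simp [Nat.lt_one_iff.1 hd] at hlt
  refine ⟨d, hd, ?_, hle, hlt⟩
  have := two_mul_choose_two d
  rcases hd.eq_or_lt with rfl | hd
  · lia
  · nlinarith

lemma four_mul_le_of_sqrt_le {x y D : ℝ} (h : x ^ 2 ≤ y) (hD : 4 * √y ≤ D) : 4 * x ≤ D := by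
  linarith [Real.le_sqrt_of_sq_le h]

lemma sqrt_mul_sub_one_le {D : ℝ} (hd : 1 ≤ d) (hdt : d ^ 2 ≤ 2 * t)
    (hlt : t + 1 < (d + 2).choose 2) (hD : 4 * √(2 * t) ≤ D) :
    √(t + 1) * (D - 1) ≤ (d + 1) * (D - d) := by
  have hdR : (1 : ℝ) ≤ d := mod_cast hd
  have hD4 : 4 * (d : ℝ) ≤ D := four_mul_le_of_sqrt_le (mod_cast hdt) hD
  have hupper : 2 * (t + 1) + 2 ≤ (d + 2) * (d + 1) := by
    have := two_mul_choose_two (d + 1)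
    lia
  -- `5 / 7` is a rational upper bound for `1 / √2`.
  rcases le_or_gt (2 * (t + 1)) ((d + 1) ^ 2) with hsq | hsq
  · have hsqrt : √((t : ℝ) + 1) ≤ 5 / 7 * (d + 1) := by
      have hsqR : 2 * ((t : ℝ) + 1) ≤ (d + 1) ^ 2 := mod_cast hsq
      refine Real.sqrt_le_iff.2 ⟨by positivity, ?_⟩
      nlinarith
    calc √(t + 1) * (D - 1) ≤ 5 / 7 * (d + 1) * (D - 1) := by
          gcongr
          linarith
      _ ≤ (d + 1) * (D - d) := by nlinarith
  · have hd2 : (2 : ℝ) ≤ d := by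
      have : 2 ≤ d := by nlinarith
      exact_mod_cast this
    have hD4' : 4 * ((d : ℝ) + 1 / 2) ≤ D := by
      have hsqR : ((d : ℝ) + 1) ^ 2 < 2 * (t + 1) := mod_cast hsq
      refine four_mul_le_of_sqrt_le ?_ hD
      nlinarith
    have hsqrt : √((t : ℝ) + 1) ≤ 5 / 7 * (d + 3 / 2) := by
      have hupperR : 2 * ((t : ℝ) + 1) + 2 ≤ (d + 2) * (d + 1) := mod_cast hupper
      refine Real.sqrt_le_iff.2 ⟨by positivity, ?_⟩
      nlinarith
    calc √(t + 1) * (D - 1) ≤ 5 / 7 * (d + 3 / 2) * (D - 1) := by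
          gcongr
          linarith
      _ ≤ (d + 1) * (D - d) := by nlinarith

lemma exists_large_hasGraphOfOrder_two (ht : 1 ≤ t) (hΔ : 4 * √(2 * t) ≤ Δ) :
    ∃ n, HasGraphOfOrder Δ 2 t n ∧ √(t + 1) * ((Δ : ℝ) - 1) / 2 ≤ n := by
  obtain ⟨d, hd, hdt, hle, hlt⟩ := exists_sq_le_choose_two_le_lt ht
  have h4 : 4 * d ≤ Δ := mod_cast four_mul_le_of_sqrt_le (x := d) (mod_cast hdt) hΔ
  obtain ⟨m, hm, hm'⟩ : ∃ m, 2 * (d - 1) + 2 * m ≤ Δ ∧ Δ + 1 ≤ 2 * m + 2 * d :=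
    ⟨Δ / 2 - (d - 1), by lia, by lia⟩
  refine ⟨_, hasGraphOfOrder_two hd (by nlinarith) hle (by lia) hm, ?_⟩
  have hchoose : 2 * ((d + 1).choose 2 : ℝ) = (d + 1) * d := mod_cast two_mul_choose_two d
  have hmR : (Δ : ℝ) + 1 ≤ 2 * m + 2 * d := mod_cast hm'
  calc √(t + 1) * ((Δ : ℝ) - 1) / 2 ≤ (d + 1) * (Δ - d) / 2 := by
        gcongr ?_ / 2
        exact sqrt_mul_sub_one_le hd hdt hlt hΔ
    _ ≤ (d + 1) * (d / 2 + m) := by nlinarith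
    _ = ((d + 1).choose 2 + (d + 1) * m : ℕ) := by push_cast; linarith

lemma exists_large_hasGraphOfOrder_two_mul (ht : 1 ≤ t) (hΔ : 4 * √(2 * t) ≤ Δ) (j : ℕ) :
    ∃ n, HasGraphOfOrder Δ (2 * (j + 2)) t n ∧
      √(t + 1) * ((Δ : ℝ) - 1) ^ (j + 2) / 2 ≤ n := by
  obtain ⟨d, hd, hdt, hle, hlt⟩ := exists_sq_le_choose_two_le_lt ht
  have h4 : 4 * d ≤ Δ := mod_cast four_mul_le_of_sqrt_le (x := d) (mod_cast hdt) hΔ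
  obtain ⟨n, hn, hgraph⟩ := exists_hasGraphOfOrder_two_mul (Δ := Δ) (m := Δ / 2) hd
    (by nlinarith) hle (by lia) (by lia) (by lia) j
  refine ⟨n, hgraph, ?_⟩
  have hm : (Δ : ℝ) - 1 ≤ 2 * (Δ / 2 : ℕ) := by
    have : (Δ : ℝ) ≤ 2 * (Δ / 2 : ℕ) + 1 := mod_cast (by lia : Δ ≤ 2 * (Δ / 2) + 1)
    linarith
  have hdΔ : (0 : ℝ) ≤ Δ - d := sub_nonneg.2 (mod_cast (by lia : d ≤ Δ))
  have hΔ1 : (0 : ℝ) ≤ Δ - 1 := sub_nonneg.2 (mod_cast (by lia : 1 ≤ Δ))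
  calc √(t + 1) * ((Δ : ℝ) - 1) ^ (j + 2) / 2
      = √(t + 1) * (Δ - 1) * (Δ - 1) * (Δ - 1) ^ j / 2 := by ring
    _ ≤ (d + 1) * (Δ - d) * (2 * (Δ / 2 : ℕ)) * (Δ - 1) ^ j / 2 := by
        gcongr ?_ * ?_ * _ / 2
        exact sqrt_mul_sub_one_le hd hdt hlt hΔ
    _ = ((d + 1) * (Δ / 2) * (Δ - d) * (Δ - 1) ^ j : ℕ) := by
        push_cast [Nat.cast_sub (by lia : d ≤ Δ), Nat.cast_sub (by lia : 1 ≤ Δ)]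
        ring
    _ ≤ n := mod_cast hn

end counting

theorem treewidth_lower_bound_even_general (k t Δ : ℕ) (hk : 2 ≤ k) (ht : 1 ≤ t)
    (hΔ : 4 * Real.sqrt (2 * t) ≤ Δ) :
    ∃ (n : ℕ) (G : SimpleGraph (Fin n)),
      (∀ v, (G.neighborSet v).ncard ≤ Δ) ∧
      G.Connected ∧
      (∀ u v, G.dist u v ≤ k) ∧
      TreewidthLE G t ∧
      Real.sqrt (t + 1) * ((Δ : ℝ) - 1) ^ (k / 2) / 2 ≤ n := by
  obtain ⟨n, ⟨G, hdeg, hconn, hdist, htw⟩, hn⟩ : ∃ n, HasGraphOfOrder Δ (2 * (k / 2)) t n ∧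
      √(t + 1) * ((Δ : ℝ) - 1) ^ (k / 2) / 2 ≤ n := by
    obtain hk2 | ⟨j, hj⟩ : k / 2 = 1 ∨ ∃ j, k / 2 = j + 2 := by
      rcases (by lia : k / 2 = 1 ∨ 2 ≤ k / 2) with h | h
      exacts [.inl h, .inr (Nat.exists_eq_add_of_le' h)]
    · simpa [hk2] using exists_large_hasGraphOfOrder_two ht hΔ
    · exact hj ▸ exists_large_hasGraphOfOrder_two_mul ht hΔ j
  exact ⟨n, G, hdeg, hconn, fun u v => (hdist u v).trans (Nat.mul_div_le k 2), htw, hn⟩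

/-- For all even integers `k ≥ 2`, `t ≥ 2`, and `Δ ≥ 4√(2t)`, there exists a
graph with maximum degree at most `Δ`, diameter at most `k`, treewidth at most
`t`, and at least `(1/2)√(t+1)·(Δ−1)^{k/2}` vertices. -/
theorem treewidth_lower_bound_even (k t Δ : ℕ) (hk : 2 ≤ k) (heven : Even k)
    (ht : 2 ≤ t) (hΔ : 4 * Real.sqrt (2 * t) ≤ Δ) :
    ∃ (n : ℕ) (G : SimpleGraph (Fin n)),
      (∀ v, (G.neighborSet v).ncard ≤ Δ) ∧
      G.Connected ∧
      (∀ u v, G.dist u v ≤ k) ∧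
      TreewidthLE G t ∧
      Real.sqrt (t + 1) * ((Δ : ℝ) - 1) ^ (k / 2) / 2 ≤ n :=
  treewidth_lower_bound_even_general k t Δ hk (one_le_two.trans ht) hΔ
end
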